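/- arXiv:1501.06752 — 2 statements merged into one kernel-verified Lean document; each statement's English description precedes it below -/
import Mathlib

section
/- The number α₁₁ = √23 · ln((√23 − 1)/(√23 + 1)) has irrationality measure at most 5.08121; that is, for every real κ > 5.08121, there exist only finitely many pairs (p, q) with p ∈ ℤ and q a positive integer such that |α₁₁ − p/q| < q^(−κ). -/
section
open Real Set Filter Topology MeasureTheory
open scoped FourierTransform

namespace IrrA

/-- normalized Chebyshev function -/
noncomputable def HH (u : ℝ) : ℝ := Real.exp (-u) * Chebyshev.psi (Real.exp u)

lemma HH_nonneg (u : ℝ) : 0 ≤ HH u := mul_nonneg (Real.exp_pos _).le (Chebyshev.psi_nonneg _)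

lemma HH_le (u : ℝ) : HH u ≤ 6 := by
  have h := Chebyshev.psi_le_const_mul_self (x := Real.exp u) (Real.exp_pos _).le
  have h4 : Real.log 4 ≤ 2 := by
    rw [show (4:ℝ) = 2 ^ 2 by norm_num, Real.log_pow]
    have := Real.log_two_lt_d9
    push_cast
    linarith
  have : HH u ≤ Real.exp (-u) * ((Real.log 4 + 4) * Real.exp u) :=
    mul_le_mul_of_nonneg_left h (Real.exp_pos _).le
  have e : Real.exp (-u) * Real.exp u = 1 := by rw [← Real.exp_add]; simp
  calc HH u ≤ (Real.log 4 + 4) * (Real.exp (-u) * Real.exp u) := by linarith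
    _ ≤ 6 := by rw [e]; linarith

lemma HH_meas : Measurable HH := by
  unfold HH
  exact (Real.measurable_exp.comp measurable_neg).mul
    (Chebyshev.psi_mono.measurable.comp Real.measurable_exp)

lemma HH_mono {y u : ℝ} (h : y ≤ u) : HH y * Real.exp (-(u - y)) ≤ HH u := by
  unfold HH
  have : Chebyshev.psi (Real.exp y) ≤ Chebyshev.psi (Real.exp u) :=
    Chebyshev.psi_mono (Real.exp_le_exp.2 h)
  have e : Real.exp (-y) * Real.exp (-(u - y)) = Real.exp (-u) := by
    rw [← Real.exp_add]; congr 1; ring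
  calc _ = Real.exp (-u) * Chebyshev.psi (Real.exp y) := by rw [← e]; ring
    _ ≤ _ := mul_le_mul_of_nonneg_left this (Real.exp_pos _).le

/-- the continuous extension -/
noncomputable def gg (z : ℂ) : ℂ :=
  (ArithmeticFunction.vonMangoldt.LFunctionResidueClassAux (1 : ZMod 1) (1 + z) - 1) / (1 + z)

lemma gg_cont : ContinuousOn gg {z | 0 ≤ z.re} := by
  unfold gg
  refine ContinuousOn.div ?_ (by fun_prop) ?_
  · refine ContinuousOn.sub ?_ continuousOn_const
    refine (ArithmeticFunction.vonMangoldt.continuousOn_LFunctionResidueClassAux (1 : ZMod 1)).comp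
      (by fun_prop) ?_
    intro z hz
    simpa using hz
  · intro z hz h
    have := congrArg Complex.re h
    simp at this hz
    linarith

lemma LS_eq {s : ℂ} (hs : 1 < s.re) :
    LSeries (fun n ↦ (ArithmeticFunction.vonMangoldt n : ℂ)) s =
    s * ∫ t in Ioi (1 : ℝ), ((Chebyshev.psi t : ℝ) : ℂ) * (t : ℂ) ^ (-(s + 1)) := by
  rw [LSeries_eq_mul_integral_of_nonneg (fun n ↦ ArithmeticFunction.vonMangoldt n) zero_le_one hs _
    (fun n ↦ ArithmeticFunction.vonMangoldt_nonneg)]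
  · simp only [Chebyshev.psi]
    congr 2
    ext t
    push_cast
    rfl
  · refine Asymptotics.IsBigO.of_bound 6 (Eventually.of_forall fun n ↦ ?_)
    have h := HH_le (Real.log n)
    rcases n.eq_zero_or_pos with rfl | hn
    · simp
    have hn' : (0:ℝ) < n := by exact_mod_cast hn
    unfold HH at h
    rw [Real.exp_neg, Real.exp_log hn'] at h
    have h2 : Chebyshev.psi n ≤ 6 * n := by
      field_simp at h
      linarith
    have h3 : Chebyshev.psi n = ∑ k ∈ Finset.Icc 1 n, ArithmeticFunction.vonMangoldt k := by
      simp only [Chebyshev.psi, Nat.floor_natCast]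
      rfl
    rw [← h3, Real.norm_of_nonneg (Chebyshev.psi_nonneg _), Real.rpow_one,
      Real.norm_of_nonneg hn'.le]
    exact h2

lemma exp_int {z : ℂ} (hz : 0 < z.re) :
    IntegrableOn (fun u : ℝ ↦ Complex.exp (-z * u)) (Ioi 0) :=
  integrableOn_exp_mul_complex_Ioi (by simpa using hz) 0

lemma HH_int {z : ℂ} (hz : 0 < z.re) :
    IntegrableOn (fun u : ℝ ↦ (HH u : ℂ) * Complex.exp (-z * u)) (Ioi 0) := by
  refine Integrable.bdd_mul (c := 6) (exp_int hz) ?_ ?_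
  · exact (Complex.measurable_ofReal.comp HH_meas).aestronglyMeasurable
  · refine Eventually.of_forall fun u ↦ ?_
    rw [Complex.norm_real, Real.norm_of_nonneg (HH_nonneg u)]
    exact HH_le u

lemma gg_eq {z : ℂ} (hz : 0 < z.re) :
    ∫ u in Ioi (0 : ℝ), ((HH u : ℂ) - 1) * Complex.exp (-z * u) = gg z := by
  have hs : 1 < (1 + z).re := by simpa using hz
  have h1 := LS_eq hs
  have h2 := ArithmeticFunction.vonMangoldt.eqOn_LFunctionResidueClassAux (a := (1 : ZMod 1))
    isUnit_one (Set.mem_ofPred.mpr hs)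
  have h3 : (fun n : ℕ ↦ ((ArithmeticFunction.vonMangoldt.residueClass (1 : ZMod 1) n : ℝ) : ℂ))
      = fun n ↦ (ArithmeticFunction.vonMangoldt n : ℂ) := by
    ext n
    rw [ArithmeticFunction.vonMangoldt.residueClass, Set.indicator_of_mem]
    exact Subsingleton.elim _ _
  simp only [h3] at h2
  have hz0 : z ≠ 0 := by rintro rfl; simp at hz
  have hs0 : 1 + z ≠ 0 := by
    intro h; rw [h] at hs; norm_num at hs
  have h4 : ∫ u in Ioi (0 : ℝ), (HH u : ℂ) * Complex.exp (-z * u) =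
      ∫ t in Ioi (1 : ℝ), ((Chebyshev.psi t : ℝ) : ℂ) * (t : ℂ) ^ (-((1 + z) + 1)) := by
    rw [← Real.exp_zero, ← integral_comp_exp_Ioi]
    refine setIntegral_congr_fun measurableSet_Ioi fun u _ ↦ ?_
    simp only [HH]
    have : ((Real.exp u : ℝ) : ℂ) ^ (-((1 + z) + 1)) = Complex.exp (u * (-((1 + z) + 1))) := by
      rw [Complex.cpow_def_of_ne_zero (by exact_mod_cast (Real.exp_pos u).ne'),
        ← Complex.ofReal_log (Real.exp_pos u).le, Real.log_exp]
    rw [this, Complex.real_smul]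
    push_cast
    have : Complex.exp (u * (-((1 + z) + 1))) =
       Complex.exp (-u) * Complex.exp (-u) * Complex.exp (-z * u) := by
      rw [← Complex.exp_add, ← Complex.exp_add]; congr 1; ring
    rw [this]
    have e : Complex.exp u * Complex.exp (-u) = 1 := by rw [← Complex.exp_add]; simp
    linear_combination (- Complex.exp (-u) * (Chebyshev.psi (Real.exp u) : ℂ)
      * Complex.exp (-z * u)) * e
  have h5 : ∫ u in Ioi (0 : ℝ), Complex.exp (-z * u) = 1 / z := by
    rw [integral_exp_mul_complex_Ioi (by simpa using hz)]
    simp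
    
  simp only [sub_mul, one_mul]
  rw [integral_sub (HH_int hz) (exp_int hz), h5, h4]
  unfold gg
  rw [h2, h1]
  simp
  field_simp
  ring

noncomputable def KK (v : ℝ) : ℝ := 2 * (1 - Real.cos v) / v ^ 2

lemma KK_nonneg (v : ℝ) : 0 ≤ KK v := by
  unfold KK
  have := Real.cos_le_one v
  have : 0 ≤ 1 - Real.cos v := by linarith
  positivity

lemma KK_le (v : ℝ) : KK v ≤ 5 * (1 + v ^ 2)⁻¹ := by
  unfold KK
  rcases eq_or_ne v 0 with rfl | hv
  · norm_num
  have hv2 : 0 < v ^ 2 := by positivity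
  have h1 := Real.one_sub_sq_div_two_le_cos (x := v)
  have h2 := Real.neg_one_le_cos v
  rw [← div_eq_mul_inv, div_le_div_iff₀ hv2 (by positivity)]
  nlinarith

lemma KK_meas : Measurable KK := by
  unfold KK; fun_prop

lemma KK_integrable : Integrable KK := by
  refine Integrable.mono' (integrable_inv_one_add_sq.const_mul 5) KK_meas.aestronglyMeasurable ?_
  refine Eventually.of_forall fun v ↦ ?_
  rw [Real.norm_of_nonneg (KK_nonneg v)]
  exact KK_le v

lemma fejer {v : ℝ} (hv : v ≠ 0) :
    ∫ t in Ioc (-1 : ℝ) 1, ((1 - |t| : ℝ) : ℂ) * Complex.exp (Complex.I * t * v) = (KK v : ℂ) := by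
  rw [← intervalIntegral.integral_of_le (by norm_num)]
  set a : ℂ := Complex.I * v with ha
  have ha0 : a ≠ 0 := by simp [ha, hv]
  have hc : Continuous fun t : ℝ ↦ ((1 - |t| : ℝ) : ℂ) * Complex.exp (Complex.I * t * v) := by
    fun_prop
  have hE : ∀ t : ℝ, HasDerivAt (fun t : ℝ ↦ Complex.exp (a * t)) (a * Complex.exp (a * t)) t := by
    intro t
    have h1 : HasDerivAt (fun t : ℝ ↦ a * (t : ℂ)) a t := by
      simpa using (Complex.ofRealCLM.hasDerivAt (x := t)).const_mul a
    simpa [mul_comm] using h1.cexp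
  have hI : ∀ t : ℝ, HasDerivAt (fun t : ℝ ↦ (t : ℂ)) 1 t := fun t ↦ by
    have := (hasDerivAt_id t).ofReal_comp
    simpa using this
  rw [← intervalIntegral.integral_add_adjacent_intervals (b := 0) (hc.intervalIntegrable _ _)
    (hc.intervalIntegrable _ _)]
  have e1 : ∫ t in (-1 : ℝ)..0, ((1 - |t| : ℝ) : ℂ) * Complex.exp (Complex.I * t * v) =
      1 / a - 1 / a ^ 2 + Complex.exp (-a) / a ^ 2 := by
    have : ∀ t ∈ uIcc (-1 : ℝ) 0, HasDerivAt
      (fun t : ℝ ↦ (1 + (t : ℂ)) * Complex.exp (a * t) / a - Complex.exp (a * t) / a ^ 2)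
      (((1 - |t| : ℝ) : ℂ) * Complex.exp (Complex.I * t * v)) t := by
      intro t ht
      rw [uIcc_of_le (by norm_num)] at ht
      have h := ((((hI t).const_add 1).mul (hE t)).div_const a).sub ((hE t).div_const (a ^ 2))
      refine h.congr_deriv ?_
      rw [abs_of_nonpos ht.2]
      rw [show Complex.I * t * v = a * t by rw [ha]; ring]
      push_cast
      field_simp
      ring
    rw [intervalIntegral.integral_eq_sub_of_hasDerivAt this (hc.intervalIntegrable _ _)]
    simp
  have e2 : ∫ t in (0 : ℝ)..1, ((1 - |t| : ℝ) : ℂ) * Complex.exp (Complex.I * t * v) =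
      Complex.exp a / a ^ 2 - 1 / a - 1 / a ^ 2 := by
    have : ∀ t ∈ uIcc (0 : ℝ) 1, HasDerivAt
      (fun t : ℝ ↦ (1 - (t : ℂ)) * Complex.exp (a * t) / a + Complex.exp (a * t) / a ^ 2)
      (((1 - |t| : ℝ) : ℂ) * Complex.exp (Complex.I * t * v)) t := by
      intro t ht
      rw [uIcc_of_le (by norm_num)] at ht
      have h := ((((hI t).const_sub 1).mul (hE t)).div_const a).add ((hE t).div_const (a ^ 2))
      refine h.congr_deriv ?_
      rw [abs_of_nonneg ht.1]
      rw [show Complex.I * t * v = a * t by rw [ha]; ring]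
      push_cast
      field_simp
      ring
    rw [intervalIntegral.integral_eq_sub_of_hasDerivAt this (hc.intervalIntegrable _ _)]
    simp
    ring
  rw [e1, e2, KK]
  have h2 : Complex.exp a + Complex.exp (-a) = 2 * Complex.cos v := by
    rw [Complex.two_cos, ha]; congr 2 <;> ring
  have ha2 : a ^ 2 = - (v : ℂ) ^ 2 := by rw [ha, mul_pow, Complex.I_sq]; ring
  push_cast
  have hv' : (v : ℂ) ≠ 0 := by exact_mod_cast hv
  calc _ = (Complex.exp a + Complex.exp (-a) - 2) / a ^ 2 := by ring
    _ = _ := by rw [h2, ha2]; field_simp; ring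

lemma KK_int_shift {l : ℝ} (hl : 0 < l) (y : ℝ) : Integrable (fun u ↦ KK (l * (y - u))) := by
  have := (KK_integrable.comp_mul_left' hl.ne').comp_sub_left y
  exact this

lemma HH_sub_norm (u : ℝ) : ‖((HH u : ℂ) - 1)‖ ≤ 7 := by
  have h1 := HH_nonneg u
  have h2 := HH_le u
  rw [show ((HH u : ℂ) - 1) = ((HH u - 1 : ℝ) : ℂ) by push_cast; rfl, Complex.norm_real,
    Real.norm_eq_abs, abs_le]
  constructor <;> linarith

lemma HH_sub_meas : Measurable (fun u ↦ ((HH u : ℂ) - 1)) :=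
  (Complex.measurable_ofReal.comp HH_meas).sub measurable_const

lemma fub {l : ℝ} (hl : 0 < l) (y : ℝ) {σ : ℝ} (hσ : 0 < σ) :
    ∫ t in Ioc (-1 : ℝ) 1, ((1 - |t| : ℝ) : ℂ) * Complex.exp (Complex.I * t * ((l * y : ℝ) : ℂ)) *
      gg (σ + Complex.I * l * t) =
    ∫ u in Ioi (0 : ℝ), ((HH u : ℂ) - 1) * Complex.exp (-σ * u) * (KK (l * (y - u)) : ℂ) := by
  have h1 : ∀ t : ℝ, gg (σ + Complex.I * l * t) =
      ∫ u in Ioi (0 : ℝ), ((HH u : ℂ) - 1) * Complex.exp (-(σ + Complex.I * l * t) * u) := by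
    intro t
    rw [gg_eq]
    simpa using hσ
  simp only [h1, ← integral_const_mul]
  rw [integral_integral_swap]
  · refine integral_congr_ae ?_
    have : ∀ᵐ u ∂(volume.restrict (Ioi (0 : ℝ))), u ≠ y := by
      refine ae_restrict_of_ae ?_
      simp [ae_iff]
    filter_upwards [this] with u hu
    have hv : l * (y - u) ≠ 0 := mul_ne_zero hl.ne' (sub_ne_zero.2 hu.symm)
    rw [← fejer hv, ← integral_const_mul]
    congr 1
    ext t
    have : Complex.exp (-(σ + Complex.I * l * t) * u) =
        Complex.exp (-σ * u) * Complex.exp (-(Complex.I * l * t) * u) := by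
      rw [← Complex.exp_add]; congr 1; ring
    rw [this]
    have : Complex.exp (Complex.I * t * ((l * (y - u) : ℝ) : ℂ)) =
      Complex.exp (Complex.I * t * ((l * y : ℝ) : ℂ)) * Complex.exp (-(Complex.I * l * t) * u) := by
      rw [← Complex.exp_add]; congr 1; push_cast; ring
    rw [this]
    ring
  · have hb : Integrable (fun p : ℝ × ℝ ↦ (1 : ℂ) * Complex.exp (-(σ : ℂ) * p.2))
        ((volume.restrict (Ioc (-1 : ℝ) 1)).prod (volume.restrict (Ioi (0 : ℝ)))) :=
      Integrable.mul_prod (f := fun _ ↦ (1 : ℂ)) (integrable_const _)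
        (exp_int (z := (σ : ℂ)) (by simpa using hσ))
    have hm : Measurable (fun p : ℝ × ℝ ↦ ((1 - |p.1| : ℝ) : ℂ) *
        Complex.exp (Complex.I * p.1 * ((l * (y - p.2) : ℝ) : ℂ)) * ((HH p.2 : ℂ) - 1)) := by
      refine Measurable.mul ?_ (HH_sub_meas.comp measurable_snd)
      fun_prop
    refine (hb.bdd_mul (c := 7) hm.aestronglyMeasurable ?_).congr ?_
    · rw [Measure.prod_restrict]
      refine (ae_restrict_iff' (measurableSet_Ioc.prod measurableSet_Ioi)).2
        (Eventually.of_forall ?_)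
      rintro ⟨t, u⟩ ⟨ht, -⟩
      simp only at ht ⊢
      rw [norm_mul, norm_mul, Complex.norm_real]
      have e : ‖Complex.exp (Complex.I * t * ((l * (y - u) : ℝ) : ℂ))‖ = 1 := by
        rw [show Complex.I * t * ((l * (y - u) : ℝ) : ℂ) = ((t * (l * (y - u)) : ℝ) : ℂ) *
          Complex.I by push_cast; ring, Complex.norm_exp_ofReal_mul_I]
      have h2 : |t| ≤ 1 := abs_le.2 ⟨ht.1.le, ht.2⟩
      have h3 : ‖1 - |t|‖ ≤ 1 := by
        rw [Real.norm_eq_abs, abs_le]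
        constructor <;> linarith [abs_nonneg t]
      rw [e, mul_one]
      calc _ ≤ 1 * 7 := mul_le_mul h3 (HH_sub_norm u) (norm_nonneg _) zero_le_one
        _ = 7 := by norm_num
    · refine Eventually.of_forall ?_
      rintro ⟨t, u⟩
      simp only [Function.uncurry]
      have : Complex.exp (-(σ + Complex.I * l * t) * u) =
          Complex.exp (-σ * u) * Complex.exp (-(Complex.I * l * t) * u) := by
        rw [← Complex.exp_add]; congr 1; ring
      rw [this]
      have : Complex.exp (Complex.I * t * ((l * (y - u) : ℝ) : ℂ)) =
        Complex.exp (Complex.I * t * ((l * y : ℝ) : ℂ)) * Complex.exp (-(Complex.I * l * t) * u) := by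
        rw [← Complex.exp_add]; congr 1; push_cast; ring
      rw [this]
      ring

end IrrA

namespace IrrA

noncomputable def GG (l : ℝ) (t : ℝ) : ℂ := ((1 - |t| : ℝ) : ℂ) * gg (Complex.I * l * t)

lemma lim0 {l : ℝ} (hl : 0 < l) (y : ℝ) :
    ∫ t in Ioc (-1 : ℝ) 1, ((1 - |t| : ℝ) : ℂ) * Complex.exp (Complex.I * t * ((l * y : ℝ) : ℂ)) *
      gg (Complex.I * l * t) =
    ∫ u in Ioi (0 : ℝ), ((HH u : ℂ) - 1) * (KK (l * (y - u)) : ℂ) := by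
  have hcm : ContinuousOn (fun p : ℝ × ℝ ↦ gg (p.1 + Complex.I * l * p.2)) (Icc 0 1 ×ˢ Icc (-1) 1) := by
    refine gg_cont.comp (by fun_prop) ?_
    rintro ⟨s, t⟩ ⟨hs, ht⟩
    simpa using hs.1
  obtain ⟨C, hC⟩ := (isCompact_Icc.prod isCompact_Icc).exists_bound_of_continuousOn hcm
  have hL : Tendsto (fun σ : ℝ ↦ ∫ t in Ioc (-1 : ℝ) 1, ((1 - |t| : ℝ) : ℂ) *
      Complex.exp (Complex.I * t * ((l * y : ℝ) : ℂ)) * gg (σ + Complex.I * l * t)) (𝓝[>] 0)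
      (𝓝 (∫ t in Ioc (-1 : ℝ) 1, ((1 - |t| : ℝ) : ℂ) *
      Complex.exp (Complex.I * t * ((l * y : ℝ) : ℂ)) * gg (Complex.I * l * t))) := by
    have hev : ∀ᶠ σ : ℝ in 𝓝[>] 0, σ ∈ Ioc (0:ℝ) 1 := Ioc_mem_nhdsGT one_pos
    refine tendsto_integral_filter_of_dominated_convergence (fun _ ↦ C) ?_ ?_ ?_ ?_
    · filter_upwards [hev] with σ hσ
      refine ContinuousOn.aestronglyMeasurable ?_ measurableSet_Ioc
      refine ContinuousOn.mul (by fun_prop) ?_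
      refine gg_cont.comp (by fun_prop) ?_
      intro t ht
      simpa using hσ.1.le
    · filter_upwards [hev] with σ hσ
      refine (ae_restrict_iff' measurableSet_Ioc).2 (Eventually.of_forall fun t ht ↦ ?_)
      rw [norm_mul, norm_mul, Complex.norm_real]
      have e : ‖Complex.exp (Complex.I * t * ((l * y : ℝ) : ℂ))‖ = 1 := by
        rw [show Complex.I * t * ((l * y : ℝ) : ℂ) = ((t * (l * y) : ℝ) : ℂ) *
          Complex.I by push_cast; ring, Complex.norm_exp_ofReal_mul_I]
      have h2 : |t| ≤ 1 := abs_le.2 ⟨ht.1.le, ht.2⟩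
      have h3 : ‖1 - |t|‖ ≤ 1 := by
        rw [Real.norm_eq_abs, abs_le]
        constructor <;> linarith [abs_nonneg t]
      rw [e, mul_one]
      have h4 := hC (σ, t) ⟨⟨hσ.1.le, hσ.2⟩, ⟨ht.1.le, ht.2⟩⟩
      calc _ ≤ 1 * C := mul_le_mul h3 h4 (norm_nonneg _) zero_le_one
        _ = C := one_mul _
    · exact integrable_const _
    · refine Eventually.of_forall fun t ↦ ?_
      refine Tendsto.const_mul _ ?_
      have h := gg_cont (Complex.I * l * t) (by simp)
      refine Tendsto.comp (h : Tendsto _ _ _) (tendsto_nhdsWithin_iff.2 ⟨?_, ?_⟩)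
      · have : Continuous fun σ : ℝ ↦ (σ : ℂ) + Complex.I * l * t := by fun_prop
        have := (this.tendsto 0).mono_left (nhdsWithin_le_nhds (s := Ioi 0))
        simpa using this
      · filter_upwards [hev] with σ hσ
        simpa using hσ.1.le
  have hR : Tendsto (fun σ : ℝ ↦ ∫ u in Ioi (0 : ℝ), ((HH u : ℂ) - 1) * Complex.exp (-σ * u) *
      (KK (l * (y - u)) : ℂ)) (𝓝[>] 0)
      (𝓝 (∫ u in Ioi (0 : ℝ), ((HH u : ℂ) - 1) * (KK (l * (y - u)) : ℂ))) := by
    have hKm : Measurable fun u ↦ (KK (l * (y - u)) : ℂ) :=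
      Complex.measurable_ofReal.comp (KK_meas.comp (by fun_prop))
    refine tendsto_integral_filter_of_dominated_convergence (fun u ↦ 7 * KK (l * (y - u))) ?_ ?_ ?_ ?_
    · refine Eventually.of_forall fun σ ↦ ?_
      exact ((HH_sub_meas.mul (by fun_prop)).mul hKm).aestronglyMeasurable
    · filter_upwards [self_mem_nhdsWithin] with σ hσ
      refine (ae_restrict_iff' measurableSet_Ioi).2 (Eventually.of_forall fun u hu ↦ ?_)
      rw [norm_mul, norm_mul, Complex.norm_real, Real.norm_of_nonneg (KK_nonneg _)]
      refine mul_le_mul_of_nonneg_right ?_ (KK_nonneg _)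
      have : ‖Complex.exp (-σ * u)‖ ≤ 1 := by
        rw [Complex.norm_exp]
        simp only [mem_Ioi] at hσ hu
        simp
        positivity
      calc _ ≤ 7 * 1 := mul_le_mul (HH_sub_norm u) this (norm_nonneg _) (by norm_num)
        _ = 7 := by norm_num
    · exact ((KK_int_shift hl y).const_mul 7).integrableOn
    · refine Eventually.of_forall fun u ↦ ?_
      refine Tendsto.mul_const _ ?_
      have : Continuous fun σ : ℝ ↦ ((HH u : ℂ) - 1) * Complex.exp (-σ * u) := by fun_prop
      have := (this.tendsto 0).mono_left (nhdsWithin_le_nhds (s := Ioi 0))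
      simpa using this
  refine tendsto_nhds_unique hL (hR.congr' ?_)
  filter_upwards [self_mem_nhdsWithin] with σ hσ
  exact (fub hl y hσ).symm

lemma RL {l : ℝ} (hl : 0 < l) :
    Tendsto (fun y : ℝ ↦ ∫ u in Ioi (0 : ℝ), ((HH u : ℂ) - 1) * (KK (l * (y - u)) : ℂ)) atTop
      (𝓝 0) := by
  have h := Real.tendsto_integral_exp_smul_cocompact ((Ioc (-1 : ℝ) 1).indicator
    (fun t ↦ ((1 - |t| : ℝ) : ℂ) * gg (Complex.I * l * t)))
  have h2 : Tendsto (fun y : ℝ ↦ -(l / (2 * π)) * y) atTop (cocompact ℝ) := by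
    refine Tendsto.mono_right ?_ atBot_le_cocompact
    have : -(l / (2 * π)) < 0 := by
      have := Real.pi_pos
      have : 0 < l / (2 * π) := by positivity
      linarith
    exact tendsto_id.const_mul_atTop_of_neg this
  refine (h.comp h2).congr fun y ↦ ?_
  rw [← lim0 hl y, ← integral_indicator measurableSet_Ioc]
  simp only [Function.comp]
  congr 1
  ext t
  by_cases ht : t ∈ Ioc (-1 : ℝ) 1
  · rw [indicator_of_mem ht, indicator_of_mem ht, Circle.smul_def, Real.fourierChar_apply]
    have : Complex.exp (2 * π * (-(t * (-(l / (2 * π)) * y)) : ℝ) * Complex.I) =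
       Complex.exp (Complex.I * t * ((l * y : ℝ) : ℂ)) := by
      congr 1
      have : (π : ℂ) ≠ 0 := by exact_mod_cast Real.pi_pos.ne'
      push_cast
      field_simp
    push_cast at this ⊢
    rw [this, smul_eq_mul]
    ring
  · simp [indicator_of_notMem ht]

end IrrA

namespace IrrA

lemma KK_total_pos : 0 < ∫ v, KK v := by
  rw [integral_pos_iff_support_of_nonneg KK_nonneg KK_integrable]
  have hsub : Ioo (0 : ℝ) 1 ⊆ Function.support KK := by
    intro v hv
    have h1 : Real.cos v < 1 := by
      rw [← Real.cos_zero]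
      exact Real.cos_lt_cos_of_nonneg_of_le_pi le_rfl (by linarith [hv.2, Real.pi_gt_three]) hv.1
    have h2 : 0 < v := hv.1
    have : 0 < 1 - Real.cos v := by linarith
    have : 0 < KK v := by unfold KK; positivity
    exact this.ne'
  refine lt_of_lt_of_le ?_ (measure_mono hsub)
  simp

lemma HK_int {l : ℝ} (hl : 0 < l) (y : ℝ) : Integrable (fun u ↦ HH u * KK (l * (y - u))) := by
  refine (KK_int_shift hl y).bdd_mul (c := 6) HH_meas.aestronglyMeasurable ?_
  refine Eventually.of_forall fun u ↦ ?_
  rw [Real.norm_of_nonneg (HH_nonneg u)]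
  exact HH_le u

lemma KK_shift_le {l : ℝ} (hl : 0 < l) (y : ℝ) :
    ∫ u in Ioi (0 : ℝ), KK (l * (y - u)) ≤ (∫ v, KK v) / l := by
  calc _ ≤ ∫ u, KK (l * (y - u)) :=
        setIntegral_le_integral (KK_int_shift hl y) (Eventually.of_forall fun u ↦ KK_nonneg _)
    _ = (∫ v, KK v) / l := by
      rw [integral_sub_left_eq_self (fun u ↦ KK (l * u)) volume y,
        Measure.integral_comp_mul_left, abs_of_pos (by positivity)]
      simp [div_eq_inv_mul]

lemma B_upper {l : ℝ} (hl : 0 < l) {e : ℝ} (he : 0 < e) :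
    ∀ᶠ y in atTop, ∫ u in Ioi (0 : ℝ), HH u * KK (l * (y - u)) < e + (∫ v, KK v) / l := by
  have h := (tendsto_zero_iff_norm_tendsto_zero.1 (RL hl)).eventually_lt_const he
  filter_upwards [h] with y hy
  have h1 : ∫ u in Ioi (0 : ℝ), ((HH u : ℂ) - 1) * (KK (l * (y - u)) : ℂ) =
     ((∫ u in Ioi (0 : ℝ), (HH u - 1) * KK (l * (y - u)) : ℝ) : ℂ) := by
    rw [← integral_complex_ofReal]
    push_cast
    rfl
  rw [h1, Complex.norm_real, Real.norm_eq_abs] at hy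
  have h2 : ∫ u in Ioi (0 : ℝ), (HH u - 1) * KK (l * (y - u)) =
     (∫ u in Ioi (0 : ℝ), HH u * KK (l * (y - u))) - ∫ u in Ioi (0 : ℝ), KK (l * (y - u)) := by
    rw [← integral_sub (HK_int hl y).integrableOn (KK_int_shift hl y).integrableOn]
    congr 1; ext u; ring
  have h3 := KK_shift_le hl y
  have h4 := le_abs_self (∫ u in Ioi (0 : ℝ), (HH u - 1) * KK (l * (y - u)))
  linarith

lemma B_lower {l : ℝ} (hl : 0 < l) {d : ℝ} (hd : 0 < d) {y : ℝ} (hy : 0 < y) :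
    HH y * Real.exp (-(2 * d)) * (l⁻¹ * ∫ v in (-(l * d))..(l * d), KK v) ≤
    ∫ u in Ioi (0 : ℝ), HH u * KK (l * ((y + d) - u)) := by
  have h1 : ∫ u in y..(y + 2 * d), KK (l * ((y + d) - u)) = l⁻¹ * ∫ v in (-(l * d))..(l * d), KK v := by
    have := intervalIntegral.integral_comp_sub_mul (a := y) (b := y + 2 * d) KK hl.ne' (l * (y + d))
    simp only [← mul_sub] at this
    rw [this, smul_eq_mul]
    congr 2 <;> ring
  rw [← h1, intervalIntegral.integral_of_le (by linarith), ← integral_const_mul]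
  calc _ ≤ ∫ u in Ioc y (y + 2 * d), HH u * KK (l * ((y + d) - u)) := by
        refine setIntegral_mono_on ((KK_int_shift hl _).const_mul _).integrableOn
          (HK_int hl _).integrableOn measurableSet_Ioc fun u hu ↦ ?_
        refine mul_le_mul_of_nonneg_right ?_ (KK_nonneg _)
        refine le_trans ?_ (HH_mono hu.1.le)
        refine mul_le_mul_of_nonneg_left (Real.exp_le_exp.2 ?_) (HH_nonneg _)
        linarith [hu.2]
    _ ≤ _ := by
        refine setIntegral_mono_set (HK_int hl _).integrableOn
          (Eventually.of_forall fun u ↦ mul_nonneg (HH_nonneg _) (KK_nonneg _)) ?_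
        refine HasSubset.Subset.eventuallyLE fun u hu ↦ ?_
        exact hy.trans hu.1

lemma HH_lt {c : ℝ} (hc : 1 < c) : ∀ᶠ y in atTop, HH y < c := by
  set S := ∫ v, KK v with hS
  have hSp : 0 < S := KK_total_pos
  have hlc : 0 < Real.log c := Real.log_pos hc
  set d := Real.log c / 4 with hd
  have hdp : 0 < d := by positivity
  set r := Real.exp (2 * d) with hr
  have hr1 : 1 < r := Real.one_lt_exp_iff.2 (by positivity)
  have hrc : r * r = c := by
    rw [hr, ← Real.exp_add, hd, show 2 * (Real.log c / 4) + 2 * (Real.log c / 4) = Real.log c by ring,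
      Real.exp_log (by linarith)]
  have hlim : Tendsto (fun l : ℝ ↦ ∫ v in (-(l * d))..(l * d), KK v) atTop (𝓝 S) := by
    have h1 : Tendsto (fun l : ℝ ↦ l * d) atTop atTop := tendsto_id.atTop_mul_const hdp
    exact intervalIntegral_tendsto_integral KK_integrable (tendsto_neg_atTop_atBot.comp h1) h1
  have hSr : S / r < S := div_lt_self hSp hr1
  obtain ⟨l, hl1, hl2⟩ := ((hlim.eventually_const_lt hSr).and (eventually_gt_atTop 0)).exists
  set T := ∫ v in (-(l * d))..(l * d), KK v with hT
  rw [div_lt_iff₀ (by linarith)] at hl1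
  have he : 0 < (T * r - S) / l := div_pos (by linarith) hl2
  have hup := B_upper hl2 he
  have hsh : Tendsto (fun y : ℝ ↦ y + d) atTop atTop := tendsto_atTop_add_const_right _ _ tendsto_id
  filter_upwards [hsh.eventually hup, eventually_gt_atTop 0] with y hy hy0
  have hlo := B_lower hl2 hdp hy0
  rw [← hS] at hy
  rw [← hT] at hlo
  have h2 : HH y * Real.exp (-(2 * d)) * (l⁻¹ * T) < T * r / l := by
    calc _ ≤ _ := hlo
      _ < _ := hy
      _ = _ := by field_simp; ring
  rw [Real.exp_neg, ← hr] at h2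
  have hrp : 0 < r := by linarith
  have hTp : 0 < T := by
    by_contra hcon
    nlinarith
  have h3 : HH y * r⁻¹ * (l⁻¹ * T) = (HH y / r) * (T / l) := by field_simp
  have h4 : T * r / l = r * (T / l) := by field_simp
  rw [h3, h4] at h2
  have h5 := lt_of_mul_lt_mul_right h2 (by positivity)
  rw [div_lt_iff₀ hrp, hrc] at h5
  exact h5

lemma lcm_bound : ∀ᶠ n : ℕ in atTop, ((Nat.lcmUpto n : ℕ) : ℝ) ≤ 2.722 ^ n := by
  have h := HH_lt (c := 1.001) (by norm_num)
  have h1 : Tendsto (fun n : ℕ ↦ Real.log (n : ℝ)) atTop atTop :=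
    Real.tendsto_log_atTop.comp tendsto_natCast_atTop_atTop
  filter_upwards [h1.eventually h, eventually_gt_atTop 0] with n hn hn0
  have hnp : (0 : ℝ) < n := by exact_mod_cast hn0
  unfold HH at hn
  rw [Real.exp_neg, Real.exp_log hnp, inv_mul_eq_div, div_lt_iff₀ hnp,
    Chebyshev.psi_eq_log_lcmUpto] at hn
  have hp : (0 : ℝ) < (Nat.lcmUpto n : ℕ) := by
    have := Nat.lcmUpto_pos n
    exact_mod_cast this
  rw [Real.log_lt_iff_lt_exp hp] at hn
  refine hn.le.trans ?_
  rw [mul_comm, Real.exp_nat_mul]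
  refine pow_le_pow_left₀ (Real.exp_pos _).le ?_ _
  have e1 := Real.exp_one_lt_d9
  have e2 : Real.exp 0.001 ≤ 1.0011 := by
    have := Real.exp_bound' (x := 0.001) (by norm_num) (by norm_num) (n := 2) (by norm_num)
    refine this.trans ?_
    norm_num [Finset.sum_range_succ]
  rw [show (1.001 : ℝ) = 1 + 0.001 by norm_num, Real.exp_add]
  have := Real.exp_pos 0.001
  nlinarith [Real.exp_pos 1]

end IrrA

namespace IrrA

noncomputable def b1 : ℝ := √2 * (√23 + 1) / 2
noncomputable def b2 : ℝ := √2 * (√23 - 1) / 2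
noncomputable def s46 : ℝ := √2 * √23

lemma s2 : √2 * √2 = 2 := Real.mul_self_sqrt (by norm_num)
lemma s23 : √23 * √23 = 23 := Real.mul_self_sqrt (by norm_num)
lemma s23_lo : 4.79583 < √23 := by rw [Real.lt_sqrt (by norm_num)]; norm_num
lemma s23_hi : √23 < 4.79584 := by rw [Real.sqrt_lt' (by norm_num)]; norm_num
lemma s2_lo : 1.41421 < √2 := by rw [Real.lt_sqrt (by norm_num)]; norm_num
lemma s2_hi : √2 < 1.41422 := by rw [Real.sqrt_lt' (by norm_num)]; norm_num
lemma s46_sq : s46 * s46 = 46 := by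
  unfold s46; linear_combination (√23 * √23) * s2 + 2 * s23
lemma s46_pos : 0 < s46 := by unfold s46; positivity
lemma s46_lo : 6.7823299 < s46 := by nlinarith [s46_sq, s46_pos]
lemma s46_hi : s46 < 6.78233 := by nlinarith [s46_sq, s46_pos]
lemma b_add : b1 + b2 = s46 := by unfold b1 b2 s46; ring
lemma b_sub : b1 - b2 = √2 := by unfold b1 b2; ring
lemma b_mul : b1 * b2 = 11 := by
  unfold b1 b2; linear_combination ((√23 * √23 - 1) / 4) * s2 + (1 / 2) * s23
lemma b2_lo : 2.68 < b2 := by linarith [b_add, b_sub, s46_lo, s2_hi]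
lemma b2_hi : b2 < 2.69 := by linarith [b_add, b_sub, s46_hi, s2_lo]
lemma b1_lo : 4.09 < b1 := by linarith [b_add, b_sub, s46_lo, s2_lo]

lemma V_int (e : ℕ) : ∀ j : ℕ, Even (j + e) → ∃ z : ℤ, s46 ^ j * (√23 * (b1 ^ e - b2 ^ e)) = z := by
  induction e using Nat.twoStepInduction with
  | zero => intro j _; exact ⟨0, by simp⟩
  | one =>
    rintro j ⟨k, hk⟩
    refine ⟨46 ^ k, ?_⟩
    have h : √23 * (b1 ^ 1 - b2 ^ 1) = s46 := by
      rw [pow_one, pow_one, b_sub]; unfold s46; ring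
    rw [h, ← pow_succ, hk, ← two_mul, pow_mul, pow_two, s46_sq]
    push_cast; rfl
  | more e ih0 ih1 =>
    intro j hj
    obtain ⟨z0, h0⟩ := ih0 j (by rw [Nat.even_iff] at hj ⊢; omega)
    obtain ⟨z1, h1⟩ := ih1 (j + 1) (by rw [Nat.even_iff] at hj ⊢; omega)
    refine ⟨z1 - 11 * z0, ?_⟩
    push_cast
    rw [← h0, ← h1, ← b_mul, pow_succ s46 j, ← b_add]
    ring

noncomputable def JJ (e : ℤ) : ℝ := ∫ x in b2..b1, x ^ (e - 1)

lemma b2_pos : 0 < b2 := by linarith [b2_lo]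
lemma b1_pos : 0 < b1 := by linarith [b1_lo]
lemma b_lt : b2 < b1 := by linarith [b1_lo, b2_hi]
lemma zero_nmem : (0 : ℝ) ∉ uIcc b2 b1 := by
  rw [uIcc_of_le b_lt.le]; intro h; linarith [h.1, b2_pos]

lemma JJ_zero : JJ 0 = Real.log (b1 / b2) := by
  unfold JJ
  simp only [zero_sub, zpow_neg_one]
  exact integral_inv zero_nmem

lemma JJ_ne {e : ℤ} (he : e ≠ 0) : JJ e = (b1 ^ e - b2 ^ e) / e := by
  unfold JJ
  rw [integral_zpow (Or.inr ⟨by omega, zero_nmem⟩)]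
  push_cast
  simp

lemma term_ne (n b c : ℕ) (hn : Even n) (hb : b ≤ n) (hc : c ≤ b) (hne : 2 * c ≠ b) :
    ∃ B : ℤ, (Nat.lcmUpto n : ℝ) * (√23 * (s46 ^ (n - b) * 11 ^ (b - c) * JJ (2 * c - b))) = B := by
  have hdvd : ∀ k : ℕ, 0 < k → k ≤ n → ∃ t : ℕ, (Nat.lcmUpto n : ℝ) = k * t := by
    intro k h1 h2
    obtain ⟨t, ht⟩ : k ∣ Nat.lcmUpto n := Finset.dvd_lcm (f := id) (by simp; omega)
    exact ⟨t, by rw [ht]; push_cast; rfl⟩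
  rw [JJ_ne (by omega)]
  rcases lt_or_gt_of_ne hne with h | h
  · obtain ⟨k, hk⟩ : ∃ k, b = 2 * c + k := ⟨b - 2 * c, by omega⟩
    obtain ⟨t, ht⟩ := hdvd k (by omega) (by omega)
    obtain ⟨z, hz⟩ := V_int k (n - b) (by rw [Nat.even_iff] at hn ⊢; omega)
    refine ⟨t * 11 ^ c * z, ?_⟩
    have e1 : (2 * (c : ℤ) - (b : ℤ)) = -(k : ℤ) := by rw [hk]; push_cast; ring
    have e2 : b - c = c + k := by omega
    have hk0 : (k : ℝ) ≠ 0 := by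
      have : k ≠ 0 := by omega
      exact_mod_cast this
    rw [e1, e2, ht]
    push_cast
    rw [← hz, zpow_neg, zpow_neg, zpow_natCast, zpow_natCast, pow_add]
    have h1 := b1_pos.ne'
    have h2 := b2_pos.ne'
    have h11 : (11 : ℝ) ^ k = b1 ^ k * b2 ^ k := by rw [← mul_pow, b_mul]
    rw [h11]
    field_simp
    ring
  · obtain ⟨k, hk⟩ : ∃ k, 2 * c = b + k := ⟨2 * c - b, by omega⟩
    obtain ⟨t, ht⟩ := hdvd k (by omega) (by omega)
    obtain ⟨z, hz⟩ := V_int k (n - b) (by rw [Nat.even_iff] at hn ⊢; omega)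
    refine ⟨t * 11 ^ (b - c) * z, ?_⟩
    have e1 : (2 * (c : ℤ) - (b : ℤ)) = (k : ℤ) := by
      have : (2 * c : ℤ) = b + k := by exact_mod_cast hk
      rw [this]; ring
    have hk0 : (k : ℝ) ≠ 0 := by
      have : k ≠ 0 := by omega
      exact_mod_cast this
    rw [e1, ht]
    push_cast
    rw [← hz, zpow_natCast, zpow_natCast]
    field_simp

noncomputable def w11 : ℝ := √11
lemma w11_sq : w11 * w11 = 11 := Real.mul_self_sqrt (by norm_num)
lemma w11_pos : 0 < w11 := by unfold w11; positivity

lemma term_all (n b c : ℕ) (hn : Even n) (hb : b ≤ n) (hc : c ≤ b) :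
    ∃ A B : ℤ, 0 ≤ (A : ℝ) ∧ (A : ℝ) ≤ s46 ^ (n - b) * (w11 ^ c * w11 ^ (b - c)) ∧
    (Nat.lcmUpto n : ℝ) * (√23 * ((-1) ^ b * s46 ^ (n - b) * 11 ^ (b - c) * JJ (2 * c - b))) =
      Nat.lcmUpto n * A * (√23 * JJ 0) + B := by
  have hs := s46_pos
  have hw := w11_pos
  by_cases hne : 2 * c = b
  · obtain ⟨k, hk⟩ : ∃ k, n - b = 2 * k := ⟨(n - b) / 2, by rw [Nat.even_iff] at hn; omega⟩
    have e1 : s46 ^ (n - b) = 46 ^ k := by rw [hk, pow_mul, pow_two, s46_sq]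
    have e2 : b - c = c := by omega
    refine ⟨46 ^ k * 11 ^ c, 0, ?_, ?_, ?_⟩
    · push_cast; positivity
    · rw [e1, e2, ← mul_pow, w11_sq]; push_cast; rfl
    · rw [e1, e2]
      have e3 : (2 * (c : ℤ) - (b : ℤ)) = 0 := by omega
      rw [e3, ← hne, pow_mul]
      push_cast
      ring
  · obtain ⟨B, hB⟩ := term_ne n b c hn hb hc hne
    refine ⟨0, (-1) ^ b * B, by simp, by simp; positivity, ?_⟩
    push_cast
    rw [← hB]
    ring

noncomputable def FF (x : ℝ) : ℝ := s46 - x - 11 / x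
noncomputable def KI (n : ℕ) : ℝ := ∫ x in b2..b1, FF x ^ n / x

lemma FF_pow (n : ℕ) {x : ℝ} (hx : x ≠ 0) : FF x ^ n / x =
    ∑ b ∈ Finset.range (n + 1), ∑ c ∈ Finset.range (b + 1),
      ((n.choose b : ℝ) * (b.choose c) * ((-1) ^ b * s46 ^ (n - b) * 11 ^ (b - c))) *
        x ^ ((2 * c - b : ℤ) - 1) := by
  have h1 : FF x = (-1) * (x + 11 / x) + s46 := by unfold FF; ring
  rw [h1, add_pow, Finset.sum_div]
  refine Finset.sum_congr rfl fun b _ ↦ ?_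
  rw [mul_pow, add_pow, Finset.mul_sum, Finset.sum_mul, Finset.sum_mul, Finset.sum_div]
  refine Finset.sum_congr rfl fun c hc ↦ ?_
  have hcb : c ≤ b := by simpa [Nat.lt_succ_iff] using hc
  have e : ((2 * c - b : ℤ) - 1) = (c : ℤ) - ((b - c : ℕ) : ℤ) - 1 := by omega
  rw [e, zpow_sub₀ hx, zpow_sub₀ hx, zpow_natCast, zpow_natCast, zpow_one, div_pow]
  field_simp

lemma KI_eq (n : ℕ) : KI n = ∑ b ∈ Finset.range (n + 1), ∑ c ∈ Finset.range (b + 1),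
      ((n.choose b : ℝ) * (b.choose c) * ((-1) ^ b * s46 ^ (n - b) * 11 ^ (b - c))) *
        JJ (2 * c - b) := by
  have hii : ∀ e : ℤ, IntervalIntegrable (fun x : ℝ ↦ x ^ e) volume b2 b1 := fun e ↦
    intervalIntegral.intervalIntegrable_zpow (Or.inr zero_nmem)
  unfold KI
  rw [intervalIntegral.integral_congr (g := fun x ↦ ∑ b ∈ Finset.range (n + 1),
      ∑ c ∈ Finset.range (b + 1),
      ((n.choose b : ℝ) * (b.choose c) * ((-1) ^ b * s46 ^ (n - b) * 11 ^ (b - c))) *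
        x ^ ((2 * c - b : ℤ) - 1))]
  · rw [intervalIntegral.integral_finsetSum]
    · refine Finset.sum_congr rfl fun b _ ↦ ?_
      rw [intervalIntegral.integral_finsetSum]
      · refine Finset.sum_congr rfl fun c _ ↦ ?_
        rw [intervalIntegral.integral_const_mul]
        rfl
      · intro c _
        exact (hii _).const_mul _
    · intro b _
      have := IntervalIntegrable.sum (Finset.range (b + 1)) (f := fun (c : ℕ) (x : ℝ) ↦
        ((n.choose b : ℝ) * (b.choose c) * ((-1) ^ b * s46 ^ (n - b) * 11 ^ (b - c))) *
        x ^ ((2 * c - b : ℤ) - 1)) (μ := volume) (a := b2) (b := b1)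
        (fun c _ ↦ (hii _).const_mul _)
      rw [Finset.sum_fn] at this
      exact this
  · intro x hx
    exact FF_pow n fun h ↦ zero_nmem (h ▸ hx)

lemma lin_form (n : ℕ) (hn : Even n) : ∃ A B : ℤ, 0 ≤ (A : ℝ) ∧ (A : ℝ) ≤ (s46 + 2 * w11) ^ n ∧
    (Nat.lcmUpto n : ℝ) * (√23 * KI n) = Nat.lcmUpto n * A * (√23 * JJ 0) + B := by
  have h : ∀ b c : ℕ, ∃ A B : ℤ, b ≤ n → c ≤ b → (0 ≤ (A : ℝ) ∧ (A : ℝ) ≤ s46 ^ (n - b) * (w11 ^ c * w11 ^ (b - c)) ∧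
    (Nat.lcmUpto n : ℝ) * (√23 * ((-1) ^ b * s46 ^ (n - b) * 11 ^ (b - c) * JJ (2 * c - b))) =
      Nat.lcmUpto n * A * (√23 * JJ 0) + B) := by
    intro b c
    by_cases hb : b ≤ n
    · by_cases hc : c ≤ b
      · obtain ⟨A, B, h⟩ := term_all n b c hn hb hc
        exact ⟨A, B, fun _ _ ↦ h⟩
      · exact ⟨0, 0, fun _ h ↦ absurd h hc⟩
    · exact ⟨0, 0, fun h ↦ absurd h hb⟩
  choose A B hAB using h
  have mem : ∀ {b c : ℕ}, b ∈ Finset.range (n + 1) → c ∈ Finset.range (b + 1) → b ≤ n ∧ c ≤ b := by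
    intro b c h1 h2
    simp only [Finset.mem_range] at h1 h2
    omega
  refine ⟨∑ b ∈ Finset.range (n + 1), ∑ c ∈ Finset.range (b + 1), n.choose b * b.choose c * A b c,
    ∑ b ∈ Finset.range (n + 1), ∑ c ∈ Finset.range (b + 1), n.choose b * b.choose c * B b c, ?_, ?_, ?_⟩
  · push_cast
    refine Finset.sum_nonneg fun b hb ↦ Finset.sum_nonneg fun c hc ↦ ?_
    have := (hAB b c (mem hb hc).1 (mem hb hc).2).1
    positivity
  · push_cast
    have e : (s46 + 2 * w11) ^ n = ∑ b ∈ Finset.range (n + 1), ∑ c ∈ Finset.range (b + 1),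
      (n.choose b : ℝ) * b.choose c * (s46 ^ (n - b) * (w11 ^ c * w11 ^ (b - c))) := by
      rw [show s46 + 2 * w11 = (w11 + w11) + s46 by ring, add_pow]
      refine Finset.sum_congr rfl fun b _ ↦ ?_
      rw [add_pow, Finset.sum_mul, Finset.sum_mul]
      refine Finset.sum_congr rfl fun c _ ↦ ?_
      ring
    rw [e]
    refine Finset.sum_le_sum fun b hb ↦ Finset.sum_le_sum fun c hc ↦ ?_
    exact mul_le_mul_of_nonneg_left (hAB b c (mem hb hc).1 (mem hb hc).2).2.1 (by positivity)
  · rw [KI_eq]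
    push_cast
    simp only [Finset.mul_sum, Finset.sum_mul]
    rw [← Finset.sum_add_distrib]
    refine Finset.sum_congr rfl fun b hb ↦ ?_
    rw [← Finset.sum_add_distrib]
    refine Finset.sum_congr rfl fun c hc ↦ ?_
    have := (hAB b c (mem hb hc).1 (mem hb hc).2).2.2
    linear_combination ((n.choose b : ℝ) * b.choose c) * this

lemma w11_lo : 3.31662 < w11 := by nlinarith [w11_sq, w11_pos]
lemma w11_lo2 : 3.3166247 < w11 := by nlinarith [w11_sq, w11_pos]
lemma w11_hi : w11 < 3.31663 := by nlinarith [w11_sq, w11_pos]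

lemma FF_nonneg {x : ℝ} (hx : x ∈ Icc b2 b1) : 0 ≤ FF x := by
  have hxp : 0 < x := b2_pos.trans_le hx.1
  have : FF x = (x - b2) * (b1 - x) / x := by
    unfold FF; rw [← b_add, ← b_mul]; field_simp; ring
  rw [this]
  exact div_nonneg (mul_nonneg (by linarith [hx.1]) (by linarith [hx.2])) hxp.le

lemma FF_le {x : ℝ} (hx : x ∈ Icc b2 b1) : FF x ≤ 0.149081 := by
  have hxp : 0 < x := b2_pos.trans_le hx.1
  have : 2 * w11 ≤ x + 11 / x := by
    rw [← w11_sq]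
    have : x + w11 * w11 / x - 2 * w11 = (x - w11) ^ 2 / x := by field_simp; ring
    have h2 : 0 ≤ (x - w11) ^ 2 / x := by positivity
    linarith
  unfold FF
  linarith [s46_hi, w11_lo2]

lemma FF_ge {x : ℝ} (hx : x ∈ Icc (3.31 : ℝ) 3.33) : 0.149 ≤ FF x := by
  have hxp : 0 < x := by linarith [hx.1]
  have : x + 11 / x ≤ 6.63331 := by
    rw [← sub_nonneg]
    have e : 6.63331 - (x + 11 / x) = (6.63331 * x - x ^ 2 - 11) / x := by field_simp; ring
    rw [e]
    refine div_nonneg ?_ hxp.le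
    nlinarith [mul_nonneg (sub_nonneg.2 hx.1) (sub_nonneg.2 hx.2), hx.1, hx.2]
  unfold FF
  linarith [s46_lo]

lemma FFi (n : ℕ) : ContinuousOn (fun x ↦ FF x ^ n / x) (Icc b2 b1) := by
  have : ∀ x ∈ Icc b2 b1, x ≠ 0 := fun x hx ↦ (b2_pos.trans_le hx.1).ne'
  unfold FF
  refine ContinuousOn.div (ContinuousOn.pow ?_ _) continuousOn_id this
  exact (continuousOn_const.sub continuousOn_id).sub (continuousOn_const.div continuousOn_id this)

lemma KI_le (n : ℕ) : KI n ≤ 0.149081 ^ n := by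
  unfold KI
  have h : ∫ x in b2..b1, FF x ^ n / x ≤ ∫ x in b2..b1, (0.149081 : ℝ) ^ n / 2 := by
    refine intervalIntegral.integral_mono_on b_lt.le
      ((FFi n).intervalIntegrable_of_Icc b_lt.le) (by simp) fun x hx ↦ ?_
    have h1 := pow_le_pow_left₀ (FF_nonneg hx) (FF_le hx) n
    have h2 : 2 ≤ x := by linarith [b2_lo, hx.1]
    exact div_le_div₀ (by positivity) h1 (by norm_num) h2
  refine h.trans ?_
  rw [intervalIntegral.integral_const, smul_eq_mul, b_sub]
  have : 0 < (0.149081 : ℝ) ^ n := by positivity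
  nlinarith [s2_hi]

lemma KI_ge (n : ℕ) : 0.005 * 0.149 ^ n ≤ KI n := by
  unfold KI
  have h : ∫ x in (3.31 : ℝ)..3.33, (0.149 : ℝ) ^ n / 4 ≤ ∫ x in (3.31 : ℝ)..3.33, FF x ^ n / x := by
    have hsub : Icc (3.31 : ℝ) 3.33 ⊆ Icc b2 b1 :=
      Icc_subset_Icc (by linarith [b2_hi]) (by linarith [b1_lo])
    refine intervalIntegral.integral_mono_on (by norm_num) (by simp)
      (((FFi n).mono hsub).intervalIntegrable_of_Icc (by norm_num)) fun x hx ↦ ?_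
    have h1 := pow_le_pow_left₀ (by norm_num) (FF_ge hx) n
    exact div_le_div₀ (pow_nonneg (FF_nonneg (hsub hx)) _) h1 (by linarith [hx.1]) (by linarith [hx.2])
  have h2 : ∫ x in (3.31 : ℝ)..3.33, FF x ^ n / x ≤ ∫ x in b2..b1, FF x ^ n / x := by
    refine intervalIntegral.integral_mono_interval (by linarith [b2_hi]) (by norm_num)
      (by linarith [b1_lo]) ?_ ((FFi n).intervalIntegrable_of_Icc b_lt.le)
    refine (ae_restrict_iff' measurableSet_Ioc).2 (Eventually.of_forall fun x hx ↦ ?_)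
    have hx' := Ioc_subset_Icc_self hx
    exact div_nonneg (pow_nonneg (FF_nonneg hx') _) (b2_pos.trans_le hx'.1).le
  refine le_trans (le_of_eq ?_) (h.trans h2)
  rw [intervalIntegral.integral_const, smul_eq_mul]
  ring

lemma alpha_eq : √23 * Real.log ((√23 - 1) / (√23 + 1)) = -(√23 * JJ 0) := by
  rw [JJ_zero, ← mul_neg, ← Real.log_inv]
  congr 2
  unfold b1 b2
  have := s23_lo
  have h1 : √23 - 1 ≠ 0 := by linarith
  have h2 : √23 + 1 ≠ 0 := by linarith
  field_simp

end IrrA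

namespace IrrA

lemma meas_core (α ρ : ℝ) (hρ : 0 < ρ) (hρ1 : ρ < 1) (a b : ℕ → ℤ) (m0 : ℕ)
    (ha : ∀ m ≥ m0, 0 ≤ (a m : ℝ)) (ha2 : ∀ m ≥ m0, (a m : ℝ) * (ρ ^ m) ^ 4 ≤ 1)
    (hE : ∀ m ≥ m0, 0 < (b m : ℝ) - a m * α) (hE2 : ∀ m ≥ m0, (b m : ℝ) - a m * α ≤ 5 * ρ ^ m)
    (hE3 : ∀ m ≥ m0, 0.02 * (ρ ^ m) ^ 5 * a m ≤ (b m : ℝ) - a m * α) (κ : ℝ) (hκ : 5 < κ) :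
    {pq : ℤ × ℕ+ | |α - (pq.1 : ℝ) / ((pq.2 : ℕ) : ℝ)| < ((pq.2 : ℕ) : ℝ) ^ (-κ)}.Finite := by
  set c0 : ℝ := 0.01 * (ρ / 10) ^ 5 with hc0
  have hc0p : 0 < c0 := by positivity
  have hlim : Tendsto (fun q : ℕ ↦ (q : ℝ) ^ (-(κ - 5))) atTop (𝓝 0) :=
    (tendsto_rpow_neg_atTop (by linarith)).comp tendsto_natCast_atTop_atTop
  have hlim2 : Tendsto (fun q : ℕ ↦ (1 : ℝ) / (10 * q)) atTop (𝓝 0) := by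
    have := (tendsto_one_div_atTop_nhds_zero_nat (𝕜 := ℝ)).const_mul (1 / 10)
    simp only [mul_zero] at this
    refine this.congr fun q ↦ ?_
    field_simp
  obtain ⟨Q, hQ⟩ := eventually_atTop.1 ((hlim.eventually_lt_const hc0p).and
    (hlim2.eventually_lt_const (pow_pos hρ m0)))
  have key : ∀ (p : ℤ) (q : ℕ), 0 < q → |α - (p : ℝ) / (q : ℝ)| < (q : ℝ) ^ (-κ) → q < Q := by
    intro p q hq0 hpq
    by_contra! hcon
    obtain ⟨h1, h2⟩ := hQ q hcon
    have hqp : (0 : ℝ) < q := by exact_mod_cast hq0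
    have hq1 : (1 : ℝ) ≤ q := by exact_mod_cast hq0
    obtain ⟨n, hn1, hn2⟩ := exists_nat_pow_near_of_lt_one (x := 1 / (10 * (q : ℝ))) (y := ρ)
      (by positivity) (by rw [div_le_one (by positivity)]; linarith) hρ hρ1
    set m := n + 1 with hm
    have hmm : m ≥ m0 := by
      by_contra! hlt
      have := pow_le_pow_of_le_one hρ.le hρ1.le hlt.le
      have h3 : ρ ^ m ≤ 1 / (10 * (q : ℝ)) := hn1.le
      linarith
    have hlow : (ρ / 10) / q ≤ ρ ^ m := by
      rw [hm, pow_succ, mul_comm]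
      calc (ρ / 10) / q = ρ * (1 / (10 * (q : ℝ))) := by field_simp
        _ ≤ _ := mul_le_mul_of_nonneg_left hn2 hρ.le
    set X := ρ ^ m with hX
    have hXp : 0 < X := pow_pos hρ m
    have hX1 : 10 * q * X ≤ 1 := by
      have h3 : X ≤ 1 / (10 * (q : ℝ)) := hn1.le
      rw [le_div_iff₀ (by positivity)] at h3
      linarith
    have hsplit : (q : ℝ) ^ (-(κ - 5)) = q ^ (-κ) * (q : ℝ) ^ 5 := by
      rw [← Real.rpow_natCast (q : ℝ) 5, ← Real.rpow_add hqp]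
      congr 1; push_cast; ring
    set w := (q : ℝ) ^ (-κ) with hw
    have hwp : 0 < w := Real.rpow_pos_of_pos hqp _
    rw [hsplit] at h1
    have ha0 := ha m hmm
    have ha1 := ha2 m hmm
    have hE0 := hE m hmm
    have hE1 := hE2 m hmm
    have hE4 := hE3 m hmm
    set A : ℝ := (a m : ℝ) with hA
    set E : ℝ := (b m : ℝ) - A * α with hEdef
    have hXq : ρ / 10 ≤ X * q := by rwa [div_le_iff₀ hqp] at hlow
    have hNeq : ((b m * q - a m * p : ℤ) : ℝ) = q * E + A * (q * (α - p / q)) := by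
      push_cast
      rw [hEdef, mul_sub (q : ℝ) α, mul_div_cancel₀ _ hqp.ne']
      ring
    have hr : 0 < ρ / 10 := by positivity
    by_cases hN : b m * q - a m * p = 0
    · rw [hN] at hNeq
      push_cast at hNeq
      have h5 : E = A * (-(α - p / q)) := by
        have : q * (E + A * (α - p / q)) = 0 := by linarith
        have := (mul_eq_zero.1 this).resolve_left hqp.ne'
        linarith
      have hAp : 0 < A := by
        rcases ha0.eq_or_lt with h | h
        · rw [← h] at h5; linarith
        · exact h
      have h6 : -(α - p / q) < w := lt_of_le_of_lt (neg_le_abs _) hpq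
      have h7 : 0.02 * X ^ 5 * A ≤ w * A := by nlinarith
      have h8 := le_of_mul_le_mul_right h7 hAp
      have h9 : (ρ / 10) ^ 5 ≤ X ^ 5 * q ^ 5 := by
        rw [← mul_pow]; exact pow_le_pow_left₀ hr.le hXq 5
      have h10 : 0.02 * X ^ 5 * q ^ 5 ≤ w * q ^ 5 := mul_le_mul_of_nonneg_right h8 (by positivity)
      have : 0 < (ρ / 10) ^ 5 := by positivity
      rw [hc0] at h1
      linarith
    · have h5 : (1 : ℝ) ≤ |((b m * q - a m * p : ℤ) : ℝ)| := by
        rw [← Int.cast_abs]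
        exact_mod_cast Int.one_le_abs hN
      rw [hNeq] at h5
      have h6 : |q * E + A * (q * (α - p / q))| ≤ q * E + A * (q * w) := by
        refine (abs_add_le _ _).trans ?_
        rw [abs_of_nonneg (by positivity : 0 ≤ q * E), abs_mul, abs_mul, abs_of_nonneg ha0,
          abs_of_pos hqp]
        gcongr
      have h7 : q * E ≤ 1 / 2 := by nlinarith
      have h8 : 1 / 2 ≤ A * (q * w) := by linarith
      have h9 : X ^ 4 / 2 ≤ q * w := by
        calc X ^ 4 / 2 = X ^ 4 * (1 / 2) := by ring
          _ ≤ X ^ 4 * (A * (q * w)) := mul_le_mul_of_nonneg_left h8 (by positivity)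
          _ = (A * X ^ 4) * (q * w) := by ring
          _ ≤ 1 * (q * w) := mul_le_mul_of_nonneg_right ha1 (by positivity)
          _ = _ := one_mul _
      have h10 : (ρ / 10) ^ 4 ≤ X ^ 4 * q ^ 4 := by
        rw [← mul_pow]; exact pow_le_pow_left₀ hr.le hXq 4
      have h11 : X ^ 4 / 2 * q ^ 4 ≤ q * w * q ^ 4 := mul_le_mul_of_nonneg_right h9 (by positivity)
      have h12 : (ρ / 10) ^ 5 ≤ (ρ / 10) ^ 4 :=
        pow_le_pow_of_le_one hr.le (by linarith) (by norm_num)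
      have : 0 < (ρ / 10) ^ 5 := by positivity
      rw [hc0] at h1
      nlinarith
  set P : ℤ := ⌈(|α| + 1) * Q⌉ with hP
  have hfin : ((Icc (-P) P) ×ˢ (Iic (Nat.succPNat Q))).Finite :=
    (finite_Icc _ _).prod (finite_Iic _)
  refine hfin.subset ?_
  rintro ⟨p, q⟩ hpq
  have hpq : |α - (p : ℝ) / ((q : ℕ) : ℝ)| < ((q : ℕ) : ℝ) ^ (-κ) := hpq
  have hqQ := key p q q.pos hpq
  have hqp : (0 : ℝ) < (q : ℕ) := by exact_mod_cast q.pos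
  have hq1 : (1 : ℝ) ≤ (q : ℕ) := by exact_mod_cast q.pos
  have hw1 : ((q : ℕ) : ℝ) ^ (-κ) ≤ 1 := Real.rpow_le_one_of_one_le_of_nonpos hq1 (by linarith)
  have h1 : |(p : ℝ) / (q : ℕ)| ≤ |α| + 1 := by
    have := abs_sub_abs_le_abs_sub ((p : ℝ) / (q : ℕ)) α
    rw [abs_sub_comm] at this
    linarith
  rw [abs_div, abs_of_pos hqp, div_le_iff₀ hqp] at h1
  have hqQ' : ((q : ℕ) : ℝ) ≤ Q := by exact_mod_cast hqQ.le
  have h2 : |(p : ℝ)| ≤ P := by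
    calc _ ≤ _ := h1
      _ ≤ (|α| + 1) * Q := mul_le_mul_of_nonneg_left hqQ' (by positivity)
      _ ≤ P := Int.le_ceil _
  have h3 : |p| ≤ P := by exact_mod_cast h2
  refine ⟨abs_le.1 h3, ?_⟩
  show q ≤ _
  rw [← PNat.coe_le_coe]
  rw [Nat.succPNat_coe]
  omega

end IrrA

namespace IrrA

lemma final (κ : ℝ) (hκ : 5 < κ) :
    {pq : ℤ × ℕ+ | |(√23 * Real.log ((√23 - 1) / (√23 + 1))) - (pq.1 : ℝ) / ((pq.2 : ℕ) : ℝ)| <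
      ((pq.2 : ℕ) : ℝ) ^ (-κ)}.Finite := by
  obtain ⟨n0, hn0⟩ := eventually_atTop.1 lcm_bound
  have h := fun m : ℕ ↦ lin_form (2 * m) (even_two_mul m)
  choose A B hA0 hA1 hAB using h
  set α := √23 * Real.log ((√23 - 1) / (√23 + 1)) with hα
  have hα2 : √23 * JJ 0 = -α := by rw [hα, alpha_eq]; ring
  have hEeq : ∀ m, (((B m : ℤ)) : ℝ) - ((Nat.lcmUpto (2 * m) * A m : ℤ) : ℝ) * α =
      (Nat.lcmUpto (2 * m) : ℝ) * (√23 * KI (2 * m)) := by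
    intro m
    rw [hAB m, hα2]
    push_cast
    ring
  have hdp : ∀ m, (0 : ℝ) < (Nat.lcmUpto (2 * m) : ℕ) := by
    intro m
    have := Nat.lcmUpto_pos (2 * m)
    exact_mod_cast this
  have hd : ∀ m ≥ n0, ((Nat.lcmUpto (2 * m) : ℕ) : ℝ) ≤ (2.722 ^ 2) ^ m := by
    intro m hm
    rw [← pow_mul]
    exact hn0 _ (by omega)
  have hA2 : ∀ m, (A m : ℝ) ≤ (13.416 ^ 2) ^ m := by
    intro m
    rw [← pow_mul]
    refine (hA1 m).trans (pow_le_pow_left₀ ?_ ?_ _)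
    · have := s46_pos; have := w11_pos; positivity
    · linarith [s46_hi, w11_hi]
  have hK0 : ∀ m, 0.005 * (0.149 ^ 2) ^ m ≤ KI (2 * m) := by
    intro m; rw [← pow_mul]; exact KI_ge _
  have hK1 : ∀ m, KI (2 * m) ≤ (0.149081 ^ 2) ^ m := by
    intro m; rw [← pow_mul]; exact KI_le _
  have hlo := s23_lo
  have hhi := s23_hi
  set ρ : ℝ := (2.722 * 0.149081) ^ 2 with hρ
  refine meas_core α ρ (by rw [hρ]; norm_num) (by rw [hρ]; norm_num)
    (fun m ↦ (Nat.lcmUpto (2 * m) : ℤ) * A m) B n0 ?_ ?_ ?_ ?_ ?_ κ hκ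
  · intro m _
    push_cast
    exact mul_nonneg (hdp m).le (hA0 m)
  · intro m hm
    push_cast
    have h1 : (Nat.lcmUpto (2 * m) : ℝ) * A m ≤ (2.722 ^ 2) ^ m * (13.416 ^ 2) ^ m :=
      mul_le_mul (hd m hm) (hA2 m) (hA0 m) (by positivity)
    have hρp : 0 < ρ := by rw [hρ]; norm_num
    calc _ ≤ (2.722 ^ 2) ^ m * (13.416 ^ 2) ^ m * (ρ ^ m) ^ 4 :=
          mul_le_mul_of_nonneg_right h1 (by positivity)
      _ = (2.722 ^ 2 * 13.416 ^ 2 * ρ ^ 4) ^ m := by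
          rw [mul_pow, mul_pow, ← pow_mul ρ, ← pow_mul ρ, mul_comm m 4]
      _ ≤ 1 := by
          refine pow_le_one₀ (by positivity) ?_
          rw [hρ]; norm_num
  · intro m _
    rw [hEeq]
    have h2 : 0 < KI (2 * m) := lt_of_lt_of_le (by positivity) (hK0 m)
    have := hdp m
    positivity
  · intro m hm
    rw [hEeq]
    have h2 : 0 < KI (2 * m) := lt_of_lt_of_le (by positivity) (hK0 m)
    calc _ ≤ (2.722 ^ 2) ^ m * (5 * (0.149081 ^ 2) ^ m) := by
          refine mul_le_mul (hd m hm) ?_ (by positivity) (by positivity)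
          exact mul_le_mul (by linarith) (hK1 m) h2.le (by norm_num)
      _ = 5 * ρ ^ m := by rw [hρ, mul_pow, mul_pow]; ring
  · intro m _
    rw [hEeq]
    push_cast
    have hρp : 0 < ρ := by rw [hρ]; norm_num
    have h3 : (ρ ^ m) ^ 5 * A m ≤ (0.149 ^ 2) ^ m := by
      calc _ ≤ (ρ ^ m) ^ 5 * (13.416 ^ 2) ^ m := mul_le_mul_of_nonneg_left (hA2 m) (by positivity)
        _ = (ρ ^ 5 * 13.416 ^ 2) ^ m := by rw [mul_pow, ← pow_mul ρ, ← pow_mul ρ, mul_comm m 5]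
        _ ≤ _ := by
          refine pow_le_pow_left₀ (by positivity) ?_ _
          rw [hρ]; norm_num
    have h4 : 0.02 * ((ρ ^ m) ^ 5 * A m) ≤ √23 * KI (2 * m) := by
      have h5 := hK0 m
      have h6 : 0 < KI (2 * m) := lt_of_lt_of_le (by positivity) h5
      have h7 : 4 * KI (2 * m) ≤ √23 * KI (2 * m) := mul_le_mul_of_nonneg_right (by linarith) h6.le
      linarith
    calc _ = (Nat.lcmUpto (2 * m) : ℝ) * (0.02 * ((ρ ^ m) ^ 5 * A m)) := by ring
      _ ≤ _ := mul_le_mul_of_nonneg_left h4 (hdp m).le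

end IrrA

end

theorem irrationality_measure_alpha_7 :
    ∀ κ : ℝ, κ > 5.08121 →
      {pq : ℤ × ℕ+ |
        |Real.sqrt 23 * Real.log ((Real.sqrt 23 - 1) / (Real.sqrt 23 + 1)) -
            (pq.1 : ℝ) / ((pq.2 : ℕ) : ℝ)| <
          ((pq.2 : ℕ) : ℝ) ^ (-κ)}.Finite := by
  intro κ hκ
  exact IrrA.final κ (by norm_num at hκ ⊢; linarith)
end

section
/- The number α₁₂ = √25 · ln((√25 − 1)/(√25 + 1)) = 5 ln(2/3) has irrationality measure at most 3.43507; that is, for every real κ > 3.43507, there exist only finitely many pairs (p, q) with p ∈ ℤ and q a positive integer such that |α₁₂ − p/q| < q^(−κ). -/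
open Filter Topology MeasureTheory

lemma vm_ext : ∃ A : ℂ → ℂ, ContinuousOn A {s | 1 ≤ s.re} ∧ ∀ s : ℂ, 1 < s.re →
    LSeries (fun n => (ArithmeticFunction.vonMangoldt n : ℂ)) s = A s + 1 / (s - 1) := by
  refine ⟨ArithmeticFunction.vonMangoldt.LFunctionResidueClassAux (q := 1) 1,
    ArithmeticFunction.vonMangoldt.continuousOn_LFunctionResidueClassAux _, fun s hs => ?_⟩
  have h := ArithmeticFunction.vonMangoldt.eqOn_LFunctionResidueClassAux (q := 1) (a := 1) isUnit_one
  have h2 := h (show s ∈ {s : ℂ | 1 < s.re} from hs)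
  rw [h2]
  have : (ArithmeticFunction.vonMangoldt.residueClass (1 : ZMod 1)) = ArithmeticFunction.vonMangoldt := by
    ext n
    simp [ArithmeticFunction.vonMangoldt.residueClass, Set.indicator, Subsingleton.elim (_ : ZMod 1) 1]
  rw [this]
  simp


noncomputable def FF (t : ℝ) : ℝ :=
  if 0 < t then Chebyshev.psi (Real.exp t) * Real.exp (-t) - 1 else 0

lemma hh_bound (t : ℝ) : 0 ≤ Chebyshev.psi (Real.exp t) * Real.exp (-t) ∧
    Chebyshev.psi (Real.exp t) * Real.exp (-t) ≤ Real.log 4 + 4 := by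
  have h1 := Chebyshev.psi_nonneg (Real.exp t)
  have h2 := Chebyshev.psi_le_const_mul_self (Real.exp_pos t).le
  refine ⟨mul_nonneg h1 (Real.exp_pos _).le, ?_⟩
  calc _ ≤ (Real.log 4 + 4) * Real.exp t * Real.exp (-t) := by gcongr
    _ = _ := by rw [mul_assoc, ← Real.exp_add]; simp

noncomputable def CC : ℝ := Real.log 4 + 5

lemma CC_pos : 0 < CC := by unfold CC; have := Real.log_nonneg (x := 4) (by norm_num); linarith

lemma FF_bound (t : ℝ) : |FF t| ≤ CC := by
  have := hh_bound t
  have h0 := CC_pos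
  have h4 := Real.log_nonneg (x := 4) (by norm_num)
  unfold FF
  split_ifs
  · unfold CC; rw [abs_le]; constructor <;> linarith
  · simpa using h0.le

lemma hh_meas : Measurable (fun t => Chebyshev.psi (Real.exp t) * Real.exp (-t)) := by
  have := Chebyshev.psi_mono.measurable
  exact (this.comp Real.measurable_exp).mul (by fun_prop)

lemma FF_meas : Measurable FF := by
  unfold FF
  exact Measurable.ite measurableSet_Ioi (hh_meas.sub_const 1) measurable_const

lemma exp_int {z : ℂ} (hz : 0 < z.re) :
    IntegrableOn (fun t : ℝ => Complex.exp (-z * t)) (Set.Ioi 0) :=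
  integrableOn_exp_mul_complex_Ioi (by simpa using hz) 0

lemma psi_int {z : ℂ} (hz : 0 < z.re) :
    IntegrableOn (fun t : ℝ => ((Chebyshev.psi (Real.exp t) * Real.exp (-t) : ℝ) : ℂ)
      * Complex.exp (-z * t)) (Set.Ioi 0) := by
  refine Integrable.bdd_mul (c := Real.log 4 + 4) (exp_int hz) ?_ ?_
  · exact (Complex.measurable_ofReal.comp hh_meas).aestronglyMeasurable
  · refine Eventually.of_forall fun t => ?_
    have := hh_bound t
    rw [Complex.norm_real, Real.norm_eq_abs, abs_of_nonneg this.1]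
    exact this.2

lemma psi_laplace {s : ℂ} (hs : 1 < s.re) :
    LSeries (fun n => (ArithmeticFunction.vonMangoldt n : ℂ)) s =
    s * ∫ t in Set.Ioi (0:ℝ), ((Chebyshev.psi (Real.exp t) * Real.exp (-t) : ℝ) : ℂ)
      * Complex.exp (-(s-1) * t) := by
  have hpsi : ∀ x : ℝ, Chebyshev.psi x = ∑ k ∈ Finset.Icc 1 ⌊x⌋₊, ArithmeticFunction.vonMangoldt k := by
    intro x
    rw [Chebyshev.psi_eq_sum_Icc]
    symm
    apply Finset.sum_subset
    · intro k; simp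
    · intro k hk hk'
      have : k = 0 := by simp at hk hk'; by_contra h; have := hk' (by omega); omega
      simp [this]
  rw [LSeries_eq_mul_integral_of_nonneg (fun n => ArithmeticFunction.vonMangoldt n) (r := 1) zero_le_one hs]
  · congr 1
    have h := integral_comp_exp_Ioi (fun t : ℝ => (∑ k ∈ Finset.Icc 1 ⌊t⌋₊, ((ArithmeticFunction.vonMangoldt k : ℝ) : ℂ)) * (t:ℂ) ^ (-(s + 1))) 0
    rw [Real.exp_zero] at h
    rw [← h]
    refine setIntegral_congr_fun measurableSet_Ioi fun t ht => ?_
    rw [hpsi, Complex.real_smul]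
    push_cast
    rw [Complex.cpow_def_of_ne_zero (by exact Complex.exp_ne_zero _), ← Complex.ofReal_exp, ← Complex.ofReal_log (Real.exp_pos t).le, Real.log_exp,
      mul_left_comm, mul_assoc]
    congr 1
    push_cast
    rw [← Complex.exp_add, ← Complex.exp_add]
    congr 1
    ring
  · refine Asymptotics.IsBigO.of_bound (Real.log 4 + 4) (Eventually.of_forall fun n => ?_)
    have h1 := Chebyshev.psi_le_const_mul_self (x := n) (by positivity)
    have h0 := Chebyshev.psi_nonneg n
    rw [hpsi, Nat.floor_natCast] at h1 h0
    rw [Real.norm_eq_abs, abs_of_nonneg h0, Real.rpow_one]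
    simpa using h1
  · intro n; exact ArithmeticFunction.vonMangoldt_nonneg

lemma laplace : ∃ H : ℂ → ℂ, ContinuousOn H {s | 1 ≤ s.re} ∧ ∀ z : ℂ, 0 < z.re →
    ∫ t : ℝ, (FF t : ℂ) * Complex.exp (-z * t) = H (1 + z) := by
  obtain ⟨A, hA, hA2⟩ := vm_ext
  have hne : ∀ s : ℂ, 1 ≤ s.re → s ≠ 0 := by
    intro s hs h; rw [h] at hs; simp at hs; linarith
  refine ⟨fun s => (A s - 1) / s, (hA.sub continuousOn_const).div continuousOn_id
    (fun s hs => hne s hs), fun z hz => ?_⟩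
  have e1 : ∫ t : ℝ, (FF t : ℂ) * Complex.exp (-z * t) =
      ∫ t in Set.Ioi (0:ℝ), (((Chebyshev.psi (Real.exp t) * Real.exp (-t) : ℝ) : ℂ)
      * Complex.exp (-z * t) - Complex.exp (-z * t)) := by
    rw [← integral_indicator measurableSet_Ioi]
    congr 1
    ext t
    by_cases h : 0 < t
    · simp [FF, h, Set.indicator]; ring
    · simp [FF, h, Set.indicator]
  have hs : 1 < (1 + z).re := by simpa using hz
  have hz0 : z ≠ 0 := by intro h; rw [h] at hz; simp at hz
  have hs0 := hne _ hs.le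
  have e2 := psi_laplace hs
  rw [hA2 _ hs, add_sub_cancel_left] at e2
  rw [e1, integral_sub (psi_int hz) (exp_int hz), integral_exp_mul_complex_Ioi (by simpa using hz)]
  have e3 : ∫ t in Set.Ioi (0:ℝ), ((Chebyshev.psi (Real.exp t) * Real.exp (-t) : ℝ) : ℂ)
      * Complex.exp (-z * t) = (A (1+z) + 1 / z) / (1 + z) := by
    rw [e2]; field_simp
  rw [e3]
  simp
  field_simp
  ring


noncomputable def Tri (v : ℝ) : ℝ := max (1 - |v|) 0
noncomputable def KK (u : ℝ) : ℝ := Real.sinc (u / 2) ^ 2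

lemma Tri_cont : Continuous Tri := by unfold Tri; fun_prop

lemma Tri_int : Integrable Tri := by
  refine Tri_cont.integrable_of_hasCompactSupport ?_
  refine HasCompactSupport.intro (K := Set.Icc (-1) 1) isCompact_Icc fun v hv => ?_
  unfold Tri
  apply max_eq_right
  by_contra h
  apply hv
  have : |v| ≤ 1 := by linarith
  exact abs_le.mp this

lemma cos_int (u : ℝ) : ∫ v in (0:ℝ)..1, (1 - v) * (2 * Real.cos (u * v)) = KK u := by
  unfold KK
  by_cases hu : u = 0
  · subst hu
    simp
    rw [intervalIntegral.integral_sub (by simp) (by simp)]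
    simp
    norm_num
  · have hd : ∀ v ∈ Set.uIcc (0:ℝ) 1, HasDerivAt (fun v => 2 * ((1 - v) * Real.sin (u * v) / u - Real.cos (u * v) / u ^ 2))
        ((1 - v) * (2 * Real.cos (u * v))) v := by
      intro v _
      have h1 : HasDerivAt (fun v => u * v) u v := by simpa using (hasDerivAt_id v).const_mul u
      have h2 := h1.sin
      have h3 := h1.cos
      have h4 : HasDerivAt (fun v : ℝ => 1 - v) (-1) v := by simpa using (hasDerivAt_id v).const_sub 1
      have h5 := (((h4.mul h2).div_const u).sub (h3.div_const (u^2))).const_mul 2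
      refine HasDerivAt.congr_deriv (f := fun v => 2 * ((1 - v) * Real.sin (u * v) / u - Real.cos (u * v) / u ^ 2)) h5 ?_
      field_simp
      ring
    rw [intervalIntegral.integral_eq_sub_of_hasDerivAt hd (by apply Continuous.intervalIntegrable; fun_prop)]
    rw [Real.sinc_of_ne_zero (by simpa using hu), div_pow, Real.sin_sq_eq_half_sub]
    rw [show 2 * (u / 2) = u by ring]
    simp
    field_simp
    ring

lemma K_formula (u : ℝ) : ∫ v : ℝ, (Tri v : ℂ) * Complex.exp (u * v * Complex.I) = (KK u : ℂ) := by
  have h1 : ∫ v : ℝ, (Tri v : ℂ) * Complex.exp (u * v * Complex.I) =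
      ∫ v in (-1:ℝ)..1, (Tri v : ℂ) * Complex.exp (u * v * Complex.I) := by
    rw [intervalIntegral.integral_of_le (by norm_num)]
    symm
    apply setIntegral_eq_integral_of_forall_compl_eq_zero
    intro v hv
    have : Tri v = 0 := by
      unfold Tri
      apply max_eq_right
      by_contra h
      have h' : |v| < 1 := by linarith
      have := abs_lt.mp h'
      exact hv ⟨this.1, this.2.le⟩
    simp [this]
  have hc : Continuous fun v : ℝ => (Tri v : ℂ) * Complex.exp (u * v * Complex.I) := by
    have := Tri_cont
    fun_prop
  rw [h1, ← intervalIntegral.integral_add_adjacent_intervals (b := 0)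
    (hc.intervalIntegrable _ _) (hc.intervalIntegrable _ _)]
  have h2 := intervalIntegral.integral_comp_neg (a := 0) (b := 1) (fun v : ℝ => (Tri v : ℂ) * Complex.exp (u * v * Complex.I))
  simp only [neg_zero] at h2
  rw [← h2, ← intervalIntegral.integral_add ?_ (hc.intervalIntegrable _ _)]
  · rw [← cos_int, ← intervalIntegral.integral_ofReal]
    apply intervalIntegral.integral_congr
    intro v hv
    simp at hv
    have e : Tri v = 1 - v := by unfold Tri; rw [abs_of_nonneg hv.1]; exact max_eq_left (by linarith)
    have e' : Tri (-v) = 1 - v := by unfold Tri; rw [abs_neg, abs_of_nonneg hv.1]; exact max_eq_left (by linarith)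
    simp only [e, e']
    push_cast
    rw [Complex.two_cos]
    ring_nf
  · exact (hc.comp continuous_neg).intervalIntegrable _ _

lemma KK_cont : Continuous KK := by unfold KK; have := Real.continuous_sinc; fun_prop
lemma KK_nonneg (u : ℝ) : 0 ≤ KK u := sq_nonneg _
lemma KK_le_one (u : ℝ) : KK u ≤ 1 := by
  unfold KK
  rw [sq_le_one_iff_abs_le_one]; exact Real.abs_sinc_le_one _
lemma KK_le (u : ℝ) (hu : u ≠ 0) : KK u ≤ 4 / u ^ 2 := by
  unfold KK
  rw [Real.sinc_of_ne_zero (by simpa using hu), div_pow]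
  have := Real.sin_sq_le_one (u / 2)
  rw [div_pow, div_div_eq_mul_div]
  gcongr
  linarith
lemma KK_ge (u : ℝ) (hu : |u| ≤ 1) : 1 / 2 ≤ KK u := by
  unfold KK
  by_cases h0 : u = 0
  · simp [h0]; norm_num
  rw [Real.sinc_of_ne_zero (by simpa using h0), div_pow, Real.sin_sq_eq_half_sub]
  rw [show 2 * (u / 2) = u by ring, le_div_iff₀ (by positivity)]
  have hb := Real.cos_bound (x := u) hu
  have := (abs_le.mp hb).2
  have h4 : |u| ^ 4 ≤ u ^ 2 := by
    rw [show |u|^4 = |u|^2 * |u|^2 by ring, sq_abs]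
    have : u ^ 2 ≤ 1 := (sq_le_one_iff_abs_le_one u).mpr hu
    nlinarith [sq_nonneg u]
  nlinarith [sq_nonneg u]

lemma KK_tail (δ l w : ℝ) (hδ : 0 < δ) (hl : 0 < l) (hw : δ < |w|) :
    KK (l * w) ≤ 4 * (1 + 1 / δ ^ 2) / l ^ 2 * (1 + w ^ 2)⁻¹ := by
  have hw0 : w ≠ 0 := by rintro rfl; simp at hw; linarith
  refine (KK_le _ (mul_ne_zero hl.ne' hw0)).trans ?_
  have h1 : δ ^ 2 ≤ w ^ 2 := by rw [← sq_abs w]; gcongr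
  have h2 : 1 ≤ w ^ 2 / δ ^ 2 := by rw [le_div_iff₀ (by positivity)]; linarith
  have hw2 : 0 < w ^ 2 := by positivity
  rw [← div_eq_mul_inv, div_le_div_iff₀ (by positivity) (by positivity)]
  rw [mul_pow]
  have : 4 * (1 + 1 / δ ^ 2) / l ^ 2 * (l ^ 2 * w ^ 2) = 4 * (w^2 + w ^ 2 / δ ^ 2) := by
    field_simp
  rw [this]; linarith

lemma KK_int (l : ℝ) (hl : 0 < l) : Integrable (fun w => KK (l * w)) := by
  have hi := (integrable_inv_one_add_sq).const_mul (2 + 4 * (1 + 1 / (1:ℝ) ^ 2) / l ^ 2)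
  refine hi.mono' (KK_cont.comp (by fun_prop)).aestronglyMeasurable (Eventually.of_forall fun w => ?_)
  rw [Real.norm_eq_abs, abs_of_nonneg (KK_nonneg _)]
  have hp : 0 < (1 + w ^ 2)⁻¹ := by positivity
  by_cases hw : 1 < |w|
  · have := KK_tail 1 l w one_pos hl hw
    nlinarith
  · have h1 := KK_le_one (l * w)
    have h2 : w ^ 2 ≤ 1 := (sq_le_one_iff_abs_le_one w).mpr (not_lt.mp hw)
    have h3 : (1/2 : ℝ) ≤ (1 + w ^ 2)⁻¹ := by
      rw [one_div]; apply inv_anti₀ (by positivity); linarith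
    have h4 : 0 < 4 * (1 + 1 / (1:ℝ) ^ 2) / l ^ 2 := by positivity
    nlinarith

/-- lower bound -/
lemma conv_lower (F : ℝ → ℝ) (hF : Measurable F) (C : ℝ) (hC : 0 < C) (hb : ∀ t, |F t| ≤ C) (δ l e x : ℝ)
    (hδ : 0 < δ) (hl : 0 < l) (he : 0 < e) (hlδ : 1 / l ≤ δ) (hx : ∀ w, |w| ≤ δ → e ≤ F (x + w)) :
    e / l - C * (4 * (1 + 1 / δ ^ 2) / l ^ 2) * Real.pi ≤ ∫ w, F (x + w) * KK (l * w) := by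
  have hi1 : Integrable ((Set.Icc (-(1/l)) (1/l)).indicator (fun _ => e / 2)) := by
    rw [integrable_indicator_iff measurableSet_Icc]
    exact integrableOn_const (by simp)
  have hi2 := (integrable_inv_one_add_sq).const_mul (C * (4 * (1 + 1 / δ ^ 2) / l ^ 2))
  have hint : Integrable (fun w => F (x + w) * KK (l * w)) := by
    refine (KK_int l hl).bdd_mul (c := C) ?_ ?_
    · exact (hF.comp (by fun_prop)).aestronglyMeasurable
    · exact Eventually.of_forall fun w => hb _
  have hval : ∫ w, ((Set.Icc (-(1/l)) (1/l)).indicator (fun _ => e / 2) w - C * (4 * (1 + 1 / δ ^ 2) / l ^ 2) * (1 + w ^ 2)⁻¹)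
      = e / l - C * (4 * (1 + 1 / δ ^ 2) / l ^ 2) * Real.pi := by
    rw [integral_sub hi1 hi2, integral_const_mul, integral_univ_inv_one_add_sq, integral_indicator measurableSet_Icc]
    congr 1
    have : 0 < 1 / l := by positivity
    simp only [setIntegral_const, smul_eq_mul, Measure.real, Real.volume_Icc]
    rw [ENNReal.toReal_ofReal (by linarith)]
    field_simp
    ring
  rw [← hval]
  refine integral_mono (hi1.sub hi2) hint fun w => ?_
  have hp : 0 < (1 + w ^ 2)⁻¹ := by positivity
  have hq : 0 < C * (4 * (1 + 1 / δ ^ 2) / l ^ 2) * (1 + w ^ 2)⁻¹ := by positivity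
  have hK := KK_nonneg (l * w)
  simp only [Pi.sub_apply]
  by_cases h1 : |w| ≤ 1 / l
  · rw [Set.indicator_of_mem (show w ∈ Set.Icc (-(1/l)) (1/l) from abs_le.mp h1)]
    have := hx w (h1.trans hlδ)
    have hk := KK_ge (l * w) (by rw [abs_mul, abs_of_pos hl]; rw [le_div_iff₀ hl] at h1; linarith)
    nlinarith
  · rw [Set.indicator_of_notMem (show w ∉ Set.Icc (-(1/l)) (1/l) from fun h => h1 (abs_le.mpr h))]
    by_cases h2 : |w| ≤ δ
    · have := hx w h2
      nlinarith
    · have h3 := KK_tail δ l w hδ hl (not_le.mp h2)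
      have h4 := (abs_le.mp (hb (x + w))).1
      have : -C * KK (l * w) ≤ F (x + w) * KK (l * w) := by gcongr
      nlinarith


lemma FFexp_int (s : ℝ) (hs : 0 < s) : Integrable (fun t : ℝ => (FF t : ℂ) * Complex.exp (-s * t)) := by
  have h1 := (exp_int (z := (s:ℂ)) (by simpa using hs))
  have h2 : Integrable ((Set.Ioi (0:ℝ)).indicator fun t : ℝ => Complex.exp (-s * t)) :=
    (integrable_indicator_iff measurableSet_Ioi).mpr h1
  have h3 := h2.bdd_mul (c := CC) (f := fun t => (FF t : ℂ))
    (Complex.measurable_ofReal.comp FF_meas).aestronglyMeasurable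
    (Eventually.of_forall fun t => by rw [Complex.norm_real]; exact FF_bound t)
  refine h3.congr (Eventually.of_forall fun t => ?_)
  by_cases h : 0 < t
  · simp [Set.indicator, h]
  · simp [Set.indicator, h, FF]

lemma fub (H : ℂ → ℂ) (hH : ∀ z : ℂ, 0 < z.re →
    ∫ t : ℝ, (FF t : ℂ) * Complex.exp (-z * t) = H (1 + z)) (s l x : ℝ) (hs : 0 < s) :
    ∫ t : ℝ, (FF t : ℂ) * Complex.exp (-s * t) * (KK (l * (t - x)) : ℂ) =
    ∫ v : ℝ, (Tri v : ℂ) * Complex.exp (-(l * x * v) * Complex.I) * H (1 + (s - l * v * Complex.I)) := by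
  have hint : Integrable (Function.uncurry fun (t v : ℝ) => (FF t : ℂ) * Complex.exp (-s * t) * ((Tri v : ℂ) * Complex.exp ((l * (t - x) : ℝ) * v * Complex.I))) (volume.prod volume) := by
    have h1 := (FFexp_int s hs).mul_prod (Tri_int.ofReal (𝕜 := ℂ))
    have h2 := h1.bdd_mul (c := 1) (f := fun z : ℝ × ℝ => Complex.exp ((l * (z.1 - x) : ℝ) * z.2 * Complex.I))
      (by apply Continuous.aestronglyMeasurable; fun_prop)
      (Eventually.of_forall fun z => by
        rw [← Complex.ofReal_mul, Complex.norm_exp_ofReal_mul_I])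
    refine h2.congr (Eventually.of_forall fun z => ?_)
    simp only [Function.uncurry]
    simp
    ring
  have h := integral_integral_swap hint
  calc _ = ∫ t : ℝ, ∫ v : ℝ, (FF t : ℂ) * Complex.exp (-s * t) * ((Tri v : ℂ) * Complex.exp ((l * (t - x) : ℝ) * v * Complex.I)) := by
        congr 1; ext t
        rw [integral_const_mul, K_formula]
    _ = _ := h
    _ = _ := by
        congr 1; ext v
        rw [← hH (s - l * v * Complex.I) (by simpa using hs), ← integral_const_mul]
        congr 1; ext t
        have : Complex.exp (-s * t) * Complex.exp ((l * (t - x) : ℝ) * v * Complex.I) =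
          Complex.exp (-(l * x * v) * Complex.I) * Complex.exp (-(s - l * v * Complex.I) * t) := by
          rw [← Complex.exp_add, ← Complex.exp_add]; congr 1; push_cast; ring
        linear_combination (FF t : ℂ) * (Tri v : ℂ) * this

lemma Tri_zero {v : ℝ} (h : 1 < |v|) : Tri v = 0 := by
  unfold Tri; apply max_eq_right; linarith
lemma Tri_nn (v : ℝ) : 0 ≤ Tri v := le_max_right _ _

lemma fub0 (H : ℂ → ℂ) (hc : ContinuousOn H {s | 1 ≤ s.re}) (hH : ∀ z : ℂ, 0 < z.re →
    ∫ t : ℝ, (FF t : ℂ) * Complex.exp (-z * t) = H (1 + z)) (l x : ℝ) (hl : 0 < l) :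
    ∫ t : ℝ, (FF t : ℂ) * (KK (l * (t - x)) : ℂ) =
    ∫ v : ℝ, (Tri v : ℂ) * Complex.exp (-(l * x * v) * Complex.I) * H (1 + (0 - l * v * Complex.I)) := by
  let s : ℕ → ℝ := fun k => 1 / ((k:ℝ) + 1)
  have hs : ∀ k, 0 < s k := fun k => by positivity
  have hs1 : ∀ k, s k ≤ 1 := fun k => by
    simp only [s]; rw [div_le_one (by positivity)]; have : (0:ℝ) ≤ k := by positivity
    linarith
  have hlim : Tendsto s atTop (𝓝 0) := tendsto_one_div_add_atTop_nhds_zero_nat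
  have hlimc : Tendsto (fun k => (s k : ℂ)) atTop (𝓝 0) := by
    simpa [Function.comp_def] using (Complex.continuous_ofReal.tendsto 0).comp hlim
  have hHc : ∀ a : ℝ, 0 ≤ a → Continuous fun v : ℝ => H (1 + (a - l * v * Complex.I)) := by
    intro a ha
    refine hc.comp_continuous (by fun_prop) fun v => ?_
    simp [ha]
  have hT := Tri_cont
  obtain ⟨M, hM⟩ := ((isCompact_Icc (a := (1:ℝ)) (b := 2)).reProdIm (isCompact_Icc (a := -l) (b := l))).exists_bound_of_continuousOn
    (hc.mono (fun s hs => by rw [Complex.mem_reProdIm] at hs; exact hs.1.1))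
  have h1 : Tendsto (fun k => ∫ t : ℝ, (FF t : ℂ) * Complex.exp (-(s k) * t) * (KK (l * (t - x)) : ℂ)) atTop
      (𝓝 (∫ t : ℝ, (FF t : ℂ) * (KK (l * (t - x)) : ℂ))) := by
    refine tendsto_integral_of_dominated_convergence (fun t => CC * KK (l * (t - x))) ?_ ?_ ?_ ?_
    · intro k
      have a1 : Measurable fun t => (FF t : ℂ) := Complex.measurable_ofReal.comp FF_meas
      have a2 : Measurable fun t => (KK (l * (t - x)) : ℂ) :=
        (Complex.continuous_ofReal.comp (KK_cont.comp (by fun_prop))).measurable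
      have a3 : Measurable fun t : ℝ => Complex.exp (-(s k) * t) := by fun_prop
      exact ((a1.mul a3).mul a2).aestronglyMeasurable
    · exact ((KK_int l hl).comp_sub_right x).const_mul CC
    · intro k
      refine Eventually.of_forall fun t => ?_
      rw [norm_mul, norm_mul, Complex.norm_real, Complex.norm_real, Real.norm_eq_abs, Real.norm_eq_abs, abs_of_nonneg (KK_nonneg _)]
      refine mul_le_mul_of_nonneg_right ?_ (KK_nonneg _)
      by_cases h : 0 < t
      · have : ‖Complex.exp (-(s k) * t)‖ ≤ 1 := by
          rw [Complex.norm_exp];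
          have : (-(s k : ℂ) * t).re = -(s k * t) := by simp
          rw [this]
          exact Real.exp_le_one_iff.mpr (by have := mul_pos (hs k) h; linarith)
        have h0 := FF_bound t
        have := norm_nonneg (Complex.exp (-(s k) * t))
        have := abs_nonneg (FF t)
        nlinarith
      · simp [FF, h, CC_pos.le]
    · refine Eventually.of_forall fun t => ?_
      have : Tendsto (fun k => Complex.exp (-(s k) * t)) atTop (𝓝 1) := by
        have h := (Complex.continuous_exp.tendsto _).comp ((hlimc.neg).mul_const (t:ℂ))
        simpa [Function.comp_def] using h
      have h := ((this.const_mul (FF t : ℂ))).mul_const (KK (l * (t - x)) : ℂ)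
      simpa using h
  have h2 : Tendsto (fun k => ∫ v : ℝ, (Tri v : ℂ) * Complex.exp (-(l * x * v) * Complex.I) * H (1 + (s k - l * v * Complex.I))) atTop
      (𝓝 (∫ v : ℝ, (Tri v : ℂ) * Complex.exp (-(l * x * v) * Complex.I) * H (1 + (0 - l * v * Complex.I)))) := by
    refine tendsto_integral_of_dominated_convergence (fun v => Tri v * M) ?_ ?_ ?_ ?_
    · intro k
      have := hHc (s k) (hs k).le
      apply Continuous.aestronglyMeasurable
      refine Continuous.mul ?_ this
      fun_prop
    · exact Tri_int.mul_const M
    · intro k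
      refine Eventually.of_forall fun v => ?_
      have e : ‖Complex.exp (-(l * x * v) * Complex.I)‖ = 1 := by
        have := Complex.norm_exp_ofReal_mul_I (-(l * x * v)); push_cast at this; exact this
      rw [norm_mul, norm_mul, e, Complex.norm_real, Real.norm_eq_abs, abs_of_nonneg (Tri_nn v), mul_one]
      by_cases hv : 1 < |v|
      · simp [Tri_zero hv]
      · refine mul_le_mul_of_nonneg_left (hM _ ?_) (Tri_nn v)
        have hv' := abs_le.mp (not_lt.mp hv)
        have := hs k
        have := hs1 k
        rw [Complex.mem_reProdIm]
        simp
        refine ⟨⟨by linarith, by linarith⟩, by nlinarith, by nlinarith⟩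
    · refine Eventually.of_forall fun v => ?_
      refine Tendsto.const_mul _ ?_
      have := (hc (1 + (0 - l * v * Complex.I)) (by simp)).tendsto
      refine this.comp ?_
      refine tendsto_nhdsWithin_iff.mpr ⟨?_, Eventually.of_forall fun k => by simp [(hs k).le]⟩
      exact (hlimc.sub_const _).const_add _
  refine tendsto_nhds_unique h1 ?_
  refine h2.congr fun k => ?_
  rw [fub H hH (s k) l x (hs k)]

lemma conv_tendsto (l : ℝ) (hl : 0 < l) :
    Tendsto (fun x => ∫ w : ℝ, FF (x + w) * KK (l * w)) atTop (𝓝 0) := by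
  obtain ⟨H, hc, hH⟩ := laplace
  have hrl := Real.tendsto_integral_exp_smul_cocompact (fun v : ℝ => (Tri v : ℂ) * H (1 + (0 - l * v * Complex.I)))
  have hx : Tendsto (fun x : ℝ => l * x / (2 * Real.pi)) atTop (cocompact ℝ) := by
    refine Tendsto.mono_right ?_ atTop_le_cocompact
    exact (tendsto_id.const_mul_atTop hl).atTop_div_const (by positivity)
  have h := hrl.comp hx
  have h2 : Tendsto (fun x => ((∫ w : ℝ, FF (x + w) * KK (l * w) : ℝ) : ℂ)) atTop (𝓝 0) := by
    refine h.congr fun x => ?_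
    have e := fub0 H hc hH l x hl
    have e2 : ((∫ w : ℝ, FF (x + w) * KK (l * w) : ℝ) : ℂ) = ∫ t : ℝ, (FF t : ℂ) * (KK (l * (t - x)) : ℂ) := by
      rw [← integral_complex_ofReal]
      rw [← integral_add_left_eq_self (fun t : ℝ => (FF t : ℂ) * (KK (l * (t - x)) : ℂ)) x]
      congr 1; ext w; push_cast; simp
    rw [e2, e]
    simp only [Function.comp]
    congr 1; ext v
    rw [Circle.smul_def, Real.fourierChar_apply]
    simp only [smul_eq_mul]
    have : Complex.exp (↑(2 * Real.pi * -(v * (l * x / (2 * Real.pi)))) * Complex.I) = Complex.exp (-(l * x * v) * Complex.I) := by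
      congr 2
      rw [← Complex.ofReal_mul, ← Complex.ofReal_mul, ← Complex.ofReal_neg]
      congr 1
      field_simp
    rw [this]; ring
  have := (Complex.continuous_re.tendsto _).comp h2
  simpa [Function.comp_def] using this


lemma choose_l (e δ : ℝ) (he : 0 < e) (hδ : 0 < δ) : ∃ l > 0, 1 / l ≤ δ ∧
    0 < e / l - CC * (4 * (1 + 1 / δ ^ 2) / l ^ 2) * Real.pi := by
  have hC := CC_pos
  have hpi := Real.pi_pos
  set K := CC * (4 * (1 + 1 / δ ^ 2)) * Real.pi with hK
  have hKp : 0 < K := by positivity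
  refine ⟨1 / δ + 2 * K / e, by positivity, ?_, ?_⟩
  · rw [div_le_iff₀ (by positivity), mul_add]
    have : δ * (1 / δ) = 1 := by field_simp
    have : 0 < δ * (2 * K / e) := by positivity
    linarith
  · set l := 1 / δ + 2 * K / e with hl
    have hlp : 0 < l := by positivity
    have : e / l - CC * (4 * (1 + 1 / δ ^ 2) / l ^ 2) * Real.pi = (e * l - K) / l ^ 2 := by
      rw [hK]; field_simp
    rw [this]
    apply div_pos _ (by positivity)
    have h1 : e * l = e / δ + 2 * K := by rw [hl]; field_simp
    have : 0 < e / δ := by positivity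
    rw [h1]; linarith

lemma hh_grow (t u : ℝ) (h : t ≤ u) :
    Chebyshev.psi (Real.exp t) * Real.exp (-t) ≤ Chebyshev.psi (Real.exp u) * Real.exp (-u) * Real.exp (u - t) := by
  rw [mul_assoc, ← Real.exp_add, show -u + (u - t) = -t by ring]
  have := Chebyshev.psi_mono (Real.exp_le_exp.mpr h)
  gcongr

lemma FF_upper (e : ℝ) (he : 0 < e) (he1 : e < 1) : ∀ᶠ x in atTop, FF x < e := by
  obtain ⟨l, hl, hl1, hl2⟩ := choose_l (e / 2) (e / 8) (by positivity) (by positivity)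
  have h := (conv_tendsto l hl).comp (tendsto_atTop_add_const_right atTop (e / 8) tendsto_id)
  have h2 := (tendsto_order.mp h).2 _ hl2
  filter_upwards [h2, eventually_gt_atTop 0] with x hx hx0
  by_contra hcon
  push Not at hcon
  simp only [Function.comp, id] at hx
  have := conv_lower FF FF_meas CC CC_pos FF_bound (e / 8) l (e / 2) (x + e / 8) (by positivity) hl (by positivity) hl1 ?_
  · linarith
  · intro w hw
    have hw := abs_le.mp hw
    have g := hh_grow x (x + e / 8 + w) (by linarith)
    unfold FF at hcon ⊢
    rw [if_pos hx0] at hcon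
    rw [if_pos (by linarith)]
    set a := Chebyshev.psi (Real.exp x) * Real.exp (-x)
    set b := Chebyshev.psi (Real.exp (x + e / 8 + w)) * Real.exp (-(x + e / 8 + w)) with hb
    have hb0 : 0 ≤ b := (hh_bound _).1
    have h3 : Real.exp (x + e / 8 + w - x) ≤ Real.exp (e / 4) := Real.exp_le_exp.mpr (by linarith)
    have h4 : Real.exp (e / 4) * (1 - e / 4) ≤ 1 := by
      have := Real.add_one_le_exp (-(e / 4))
      calc _ ≤ Real.exp (e / 4) * Real.exp (-(e/4)) := by gcongr; linarith
        _ = 1 := by rw [← Real.exp_add]; simp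
    have h5 : a ≤ b * Real.exp (e / 4) := g.trans (by gcongr)
    have h6 : a * (1 - e / 4) ≤ b := by
      calc a * (1 - e / 4) ≤ b * Real.exp (e / 4) * (1 - e / 4) := by gcongr; linarith
        _ = b * (Real.exp (e / 4) * (1 - e / 4)) := by ring
        _ ≤ b * 1 := by gcongr
        _ = b := mul_one b
    nlinarith

lemma FF_lower (e : ℝ) (he : 0 < e) (he1 : e < 1) : ∀ᶠ x in atTop, -e < FF x := by
  obtain ⟨l, hl, hl1, hl2⟩ := choose_l (e / 2) (e / 8) (by positivity) (by positivity)
  have h := (conv_tendsto l hl).comp (tendsto_atTop_add_const_right atTop (-(e / 8)) tendsto_id)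
  have h2 := (tendsto_order.mp h).1 _ (neg_neg_of_pos hl2)
  filter_upwards [h2, eventually_gt_atTop e] with x hx hx0
  by_contra hcon
  push Not at hcon
  simp only [Function.comp, id] at hx
  have := conv_lower (fun t => - FF t) FF_meas.neg CC CC_pos (fun t => by rw [abs_neg]; exact FF_bound t)
     (e / 8) l (e / 2) (x + -(e / 8)) (by positivity) hl (by positivity) hl1 ?_
  · simp only [neg_mul, integral_neg] at this
    linarith
  · intro w hw
    have hw := abs_le.mp hw
    have g := hh_grow (x + -(e / 8) + w) x (by linarith)
    unfold FF at hcon ⊢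
    rw [if_pos (by linarith)] at hcon
    rw [if_pos (by linarith)]
    set a := Chebyshev.psi (Real.exp x) * Real.exp (-x)
    have ha0 : 0 ≤ a := (hh_bound _).1
    set b := Chebyshev.psi (Real.exp (x + -(e / 8) + w)) * Real.exp (-(x + -(e / 8) + w)) with hb
    have h3 : Real.exp (x - (x + -(e / 8) + w)) ≤ Real.exp (e / 4) := Real.exp_le_exp.mpr (by linarith)
    have h4 : Real.exp (e / 4) * (1 - e / 4) ≤ 1 := by
      have := Real.add_one_le_exp (-(e / 4))
      calc _ ≤ Real.exp (e / 4) * Real.exp (-(e/4)) := by gcongr; linarith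
        _ = 1 := by rw [← Real.exp_add]; simp
    have h5 : b ≤ a * Real.exp (e / 4) := g.trans (by gcongr)
    have h6 : b * (1 - e / 4) ≤ a := by
      calc b * (1 - e / 4) ≤ a * Real.exp (e / 4) * (1 - e / 4) := by gcongr; linarith
        _ = a * (Real.exp (e / 4) * (1 - e / 4)) := by ring
        _ ≤ a * 1 := by gcongr
        _ = a := mul_one a
    nlinarith

lemma psi_pnt : Tendsto (fun x : ℝ => Chebyshev.psi x / x) atTop (𝓝 1) := by
  have h : Tendsto FF atTop (𝓝 0) := by
    rw [Metric.tendsto_nhds]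
    intro e he
    have hm : 0 < min e (1/2) := by positivity
    have hm1 : min e (1/2) < 1 := lt_of_le_of_lt (min_le_right _ _) (by norm_num)
    filter_upwards [FF_upper _ hm hm1, FF_lower _ hm hm1] with x h1 h2
    rw [Real.dist_eq, sub_zero, abs_lt]
    have := min_le_left e (1/2)
    constructor <;> linarith
  have h2 := (h.comp Real.tendsto_log_atTop).add_const 1
  rw [zero_add] at h2
  refine h2.congr' ?_
  filter_upwards [eventually_gt_atTop 1] with x hx
  have : 0 < Real.log x := Real.log_pos hx
  simp only [Function.comp, FF, if_pos this, Real.exp_neg]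
  rw [Real.exp_log (by linarith)]
  ring

lemma theta_pnt : Tendsto (fun x : ℝ => Chebyshev.theta x / x) atTop (𝓝 1) := by
  have h1 : Tendsto (fun x : ℝ => (Chebyshev.psi x - Chebyshev.theta x) / x) atTop (𝓝 0) := by
    have hl : Real.sqrt =o[atTop] (fun x : ℝ => x) := by
      refine (Asymptotics.isLittleO_iff_tendsto' ?_).mpr ?_
      · filter_upwards [eventually_gt_atTop 0] with x hx h0
        linarith
      · have := (tendsto_inv_atTop_zero (𝕜 := ℝ)).comp Real.tendsto_sqrt_atTop
        refine this.congr fun x => ?_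
        simp [Function.comp, Real.sqrt_div_self']
    exact (Chebyshev.isBigO_psi_sub_theta_sqrt.trans_isLittleO hl).tendsto_div_nhds_zero
  have h2 := psi_pnt.sub h1
  rw [sub_zero] at h2
  refine h2.congr fun x => ?_
  ring


def SS (n : ℕ) : Finset ℕ :=
  (Finset.Icc 1 7).biUnion (fun i => (Finset.Ioc (14 * n / i) (15 * n / i)).filter Nat.Prime)

lemma mem_SS {n p : ℕ} (h : p ∈ SS n) : p.Prime ∧ ∃ i, 1 ≤ i ∧ i ≤ 7 ∧ 14 * n < p * i ∧ p * i ≤ 15 * n := by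
  simp only [SS, Finset.mem_biUnion, Finset.mem_filter, Finset.mem_Ioc, Finset.mem_Icc] at h
  obtain ⟨i, ⟨h1, h2⟩, ⟨h3, h4⟩, h5⟩ := h
  exact ⟨h5, i, h1, h2, (Nat.div_lt_iff_lt_mul (by omega)).mp h3, (Nat.le_div_iff_mul_le (by omega)).mp h4⟩

lemma SS_gt {n p : ℕ} (h : p ∈ SS n) : 2 * n < p := by
  obtain ⟨_, i, h1, h2, h3, h4⟩ := mem_SS h
  by_contra hc
  have : p * i ≤ 2 * n * 7 := Nat.mul_le_mul (by omega) h2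
  omega

lemma SS_le {n p : ℕ} (h : p ∈ SS n) : p ≤ 16 * n := by
  obtain ⟨_, i, h1, h2, h3, h4⟩ := mem_SS h
  have : p * 1 ≤ p * i := Nat.mul_le_mul le_rfl h1
  omega

lemma dvd_lcmUpto {m j : ℕ} (h1 : 1 ≤ j) (h2 : j ≤ m) : j ∣ Nat.lcmUpto m :=
  Finset.dvd_lcm (f := id) (Finset.mem_Icc.mpr ⟨h1, h2⟩)

lemma prod_SS_dvd (n : ℕ) : ∏ p ∈ SS n, p ∣ Nat.lcmUpto (16 * n) := by
  refine Finset.prod_primes_dvd _ (fun p hp => (mem_SS hp).1.prime) fun p hp => ?_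
  exact dvd_lcmUpto (mem_SS hp).1.one_le (SS_le hp)

def DD (n : ℕ) : ℕ := Nat.lcmUpto (16 * n) / ∏ p ∈ SS n, p

lemma DD_mul (n : ℕ) : DD n * ∏ p ∈ SS n, p = Nat.lcmUpto (16 * n) :=
  Nat.div_mul_cancel (prod_SS_dvd n)

lemma DD_pos (n : ℕ) : 0 < DD n := by
  have := DD_mul n
  have h := Nat.lcmUpto_pos (16 * n)
  rw [← this] at h
  exact Nat.pos_of_ne_zero (left_ne_zero_of_mul h.ne')

lemma dvd_DD (n j : ℕ) (h1 : 1 ≤ j) (h2 : j ≤ 16 * n) (c : ℤ) (hc : ∀ p ∈ SS n, p ∣ j → (p : ℤ) ∣ c) :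
    (j : ℤ) ∣ (DD n : ℤ) * c := by
  set Q1 := ∏ p ∈ (SS n).filter (fun p => p ∣ j), p
  set Q2 := ∏ p ∈ (SS n).filter (fun p => ¬ p ∣ j), p
  have hQ : Q1 * Q2 = ∏ p ∈ SS n, p := Finset.prod_filter_mul_prod_filter_not _ _ _
  have hQ1 : (Q1 : ℤ) ∣ c := by
    rw [Int.natCast_dvd]
    refine Finset.prod_primes_dvd _ (fun p hp => (mem_SS (Finset.mem_filter.mp hp).1).1.prime) fun p hp => ?_
    have := Finset.mem_filter.mp hp
    exact Int.natCast_dvd.mp (hc p this.1 this.2)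
  have hQ2 : Q2 ∣ Nat.lcmUpto (16 * n) := by
    refine dvd_trans ?_ (prod_SS_dvd n)
    rw [← hQ]; exact dvd_mul_left _ _
  have hcop : Nat.Coprime j Q2 := by
    refine Nat.Coprime.prod_right fun p hp => ?_
    have := Finset.mem_filter.mp hp
    exact ((Nat.Prime.coprime_iff_not_dvd (mem_SS this.1).1).mpr this.2).symm
  have h3 := hcop.mul_dvd_of_dvd_of_dvd (dvd_lcmUpto h1 h2) hQ2
  rw [← DD_mul, ← hQ, ← mul_assoc] at h3
  have hQ2p : 0 < Q2 := Finset.prod_pos fun p hp => (mem_SS (Finset.mem_filter.mp hp).1).1.pos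
  have h4 := Nat.dvd_of_mul_dvd_mul_right hQ2p h3
  have h5 : (j : ℤ) ∣ (DD n : ℤ) * Q1 := by exact_mod_cast h4
  exact h5.trans (mul_dvd_mul_left _ hQ1)

lemma log_DD (n : ℕ) : Real.log (DD n) = Chebyshev.psi (16 * n) -
    ∑ i ∈ Finset.Icc 1 7, (Chebyshev.theta (15 * n / (i:ℕ)) - Chebyshev.theta (14 * n / (i:ℕ))) := by
  have h1 : Chebyshev.psi (16 * n) = Real.log (DD n) + ∑ p ∈ SS n, Real.log p := by
    have := Chebyshev.psi_eq_log_lcmUpto (16 * n)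
    push_cast at this
    rw [this, ← DD_mul]
    have hp : ∀ p ∈ SS n, (p : ℝ) ≠ 0 := fun p hp => by exact_mod_cast (mem_SS hp).1.ne_zero
    push_cast
    rw [Real.log_mul (by exact_mod_cast (DD_pos n).ne') (Finset.prod_ne_zero_iff.mpr hp), Real.log_prod hp]
  rw [h1, SS, Finset.sum_biUnion]
  · have : ∀ i ∈ Finset.Icc 1 7, ∑ p ∈ (Finset.Ioc (14 * n / i) (15 * n / i)).filter Nat.Prime, Real.log p =
      Chebyshev.theta (15 * n / (i:ℕ)) - Chebyshev.theta (14 * n / (i:ℕ)) := by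
      intro i hi
      unfold Chebyshev.theta
      have e1 := Nat.floor_div_eq_div (K := ℝ) (15 * n) i
      have e2 := Nat.floor_div_eq_div (K := ℝ) (14 * n) i
      push_cast at e1 e2
      rw [e1, e2, eq_sub_iff_add_eq, Finset.sum_filter, Finset.sum_filter, Finset.sum_filter, add_comm]
      rw [Finset.sum_Ioc_consecutive _ (Nat.zero_le _) (Nat.div_le_div_right (by omega))]
    rw [Finset.sum_congr rfl this]; ring
  · intro i hi j hj hij
    rw [Function.onFun, Finset.disjoint_left]
    intro p hp hq
    simp only [Finset.mem_filter, Finset.mem_Ioc, Finset.coe_Icc, Set.mem_Icc] at hp hq hi hj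
    have a1 := (Nat.div_lt_iff_lt_mul (by omega)).mp hp.1.1
    have a2 := (Nat.le_div_iff_mul_le (by omega)).mp hp.1.2
    have b1 := (Nat.div_lt_iff_lt_mul (by omega)).mp hq.1.1
    have b2 := (Nat.le_div_iff_mul_le (by omega)).mp hq.1.2
    obtain ⟨hi1, hi2⟩ := hi
    obtain ⟨hj1, hj2⟩ := hj
    interval_cases i <;> interval_cases j <;> omega

lemma DD_bound : ∀ᶠ n : ℕ in atTop, (DD n : ℝ) ≤ Real.exp (13.41 * n) := by
  have hth : ∀ c : ℝ, 0 < c → Tendsto (fun n : ℕ => Chebyshev.theta (c * n) / n) atTop (𝓝 c) := by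
    intro c hc
    have h1 : Tendsto (fun n : ℕ => c * (n:ℝ)) atTop atTop :=
      (tendsto_natCast_atTop_atTop).const_mul_atTop hc
    have h2 := (theta_pnt.comp h1).const_mul c
    rw [mul_one] at h2
    refine h2.congr fun n => ?_
    simp only [Function.comp]
    by_cases h : (n:ℝ) = 0
    · simp [h]
    · field_simp
  have hps : Tendsto (fun n : ℕ => Chebyshev.psi (16 * n) / n) atTop (𝓝 16) := by
    have h1 : Tendsto (fun n : ℕ => (16:ℝ) * (n:ℝ)) atTop atTop :=
      (tendsto_natCast_atTop_atTop).const_mul_atTop (by norm_num)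
    have h2 := (psi_pnt.comp h1).const_mul 16
    rw [mul_one] at h2
    refine h2.congr fun n => ?_
    simp only [Function.comp]
    by_cases h : (n:ℝ) = 0
    · simp [h]
    · field_simp
  have hsum : Tendsto (fun n : ℕ => ∑ i ∈ Finset.Icc 1 7, (Chebyshev.theta (15 * n / (i:ℕ)) / n - Chebyshev.theta (14 * n / (i:ℕ)) / n)) atTop
      (𝓝 (∑ i ∈ Finset.Icc 1 7, ((15:ℝ) / (i:ℕ) - 14 / (i:ℕ)))) := by
    refine tendsto_finsetSum _ fun i hi => ?_
    have hi0 : 0 < i := by have := Finset.mem_Icc.mp hi; omega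
    have hi' : (0:ℝ) < i := by exact_mod_cast hi0
    refine Tendsto.sub ?_ ?_
    · refine (hth (15 / i) (by positivity)).congr fun n => ?_
      rw [div_mul_eq_mul_div]
    · refine (hth (14 / i) (by positivity)).congr fun n => ?_
      rw [div_mul_eq_mul_div]
  have h := hps.sub hsum
  have hv : (16:ℝ) - ∑ i ∈ Finset.Icc 1 7, ((15:ℝ) / (i:ℕ) - 14 / (i:ℕ)) < 13.41 := by
    simp [Finset.sum_Icc_succ_top]
    norm_num
  have h3 := (tendsto_order.mp h).2 _ hv
  filter_upwards [h3, eventually_gt_atTop 0] with n hn hn0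
  have hn' : (0:ℝ) < n := by exact_mod_cast hn0
  rw [← Real.log_le_iff_le_exp (by exact_mod_cast DD_pos n), log_DD]
  have : Chebyshev.psi (16 * n) -
    ∑ i ∈ Finset.Icc 1 7, (Chebyshev.theta (15 * n / (i:ℕ)) - Chebyshev.theta (14 * n / (i:ℕ))) =
    (Chebyshev.psi (16 * n) / n - ∑ i ∈ Finset.Icc 1 7, (Chebyshev.theta (15 * n / (i:ℕ)) / n - Chebyshev.theta (14 * n / (i:ℕ)) / n)) * n := by
    rw [sub_mul, Finset.sum_mul]
    congr 1
    · field_simp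
    · refine Finset.sum_congr rfl fun i _ => ?_
      field_simp
  rw [this]
  gcongr


noncomputable def qq : Polynomial ℤ := (Polynomial.X - Polynomial.C 2) * (Polynomial.C 3 - Polynomial.X)
noncomputable def cc (n k : ℕ) : ℤ := (qq ^ (15 * n)).coeff k

lemma qq_deg : qq.natDegree ≤ 2 := by unfold qq; compute_degree

lemma qq_pow_deg (n : ℕ) : (qq ^ n).natDegree ≤ 2 * n := by
  refine Polynomial.natDegree_pow_le.trans ?_
  have := qq_deg
  nlinarith

lemma gain {n p k : ℕ} (hp : p ∈ SS n) (hk : (p : ℤ) ∣ (k : ℤ) - 14 * n) : (p : ℤ) ∣ cc n k := by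
  obtain ⟨hpr, i, hi1, hi2, h1, h2⟩ := mem_SS hp
  have hgt := SS_gt hp
  have : Fact p.Prime := ⟨hpr⟩
  rw [← ZMod.intCast_zmod_eq_zero_iff_dvd]
  unfold cc
  obtain ⟨r, hr⟩ := Nat.exists_eq_add_of_le h2
  have e : (((qq ^ (15 * n)).coeff k : ℤ) : ZMod p) = ((qq ^ (15 * n)).map (Int.castRingHom (ZMod p))).coeff k := by
    rw [Polynomial.coeff_map]; rfl
  rw [e, Polynomial.map_pow, hr, pow_add, mul_comm p i, pow_mul, ← ZMod.expand_card, Polynomial.coeff_mul]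
  refine Finset.sum_eq_zero fun ab hab => ?_
  obtain ⟨a, b⟩ := ab
  rw [Finset.HasAntidiagonal.mem_antidiagonal] at hab
  simp only at hab ⊢
  rw [Polynomial.coeff_expand hpr.pos]
  split_ifs with hd
  · rw [Polynomial.coeff_eq_zero_of_natDegree_lt (n := b), mul_zero]
    refine lt_of_le_of_lt (Polynomial.natDegree_pow_le.trans (Nat.mul_le_mul le_rfl (Polynomial.natDegree_map_le.trans qq_deg))) ?_
    by_contra hb
    have hd' : (p : ℤ) ∣ a := by exact_mod_cast hd
    have h3 : (p : ℤ) ∣ (n : ℤ) + b - r := by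
      have : (n : ℤ) + b - r = ((k : ℤ) - 14 * n) - a + p * i := by
        have : (15 * n : ℤ) = p * i + r := by exact_mod_cast hr
        have : (a : ℤ) + b = k := by exact_mod_cast hab
        linarith
      rw [this]
      exact dvd_add (dvd_sub hk hd') (dvd_mul_right _ _)
    have := Int.le_of_dvd (by omega) h3
    omega
  · simp

lemma six_dvd (n k : ℕ) (hk : k ≤ 15 * n) : (6 : ℤ) ^ (15 * n - k) ∣ cc n k := by
  have h1 : (qq ^ (15 * n)).comp (Polynomial.C 6 * Polynomial.X) =
      Polynomial.C (6 ^ (15 * n)) * ((Polynomial.C 3 * Polynomial.X - 1) * (1 - Polynomial.C 2 * Polynomial.X)) ^ (15 * n) := by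
    rw [Polynomial.pow_comp, Polynomial.C_pow, ← mul_pow]
    congr 1
    simp only [qq, Polynomial.mul_comp, Polynomial.sub_comp, Polynomial.X_comp, Polynomial.C_comp]
    have e6 : (Polynomial.C 6 : Polynomial ℤ) = 6 := rfl
    have e2 : (Polynomial.C 2 : Polynomial ℤ) = 2 := rfl
    have e3 : (Polynomial.C 3 : Polynomial ℤ) = 3 := rfl
    rw [e6, e2, e3]; ring
  have h2 := congrArg (fun P => Polynomial.coeff P k) h1
  simp only [Polynomial.comp_C_mul_X_coeff, Polynomial.coeff_C_mul] at h2
  refine ⟨(((Polynomial.C 3 * Polynomial.X - 1) * (1 - Polynomial.C 2 * Polynomial.X)) ^ (15 * n) : Polynomial ℤ).coeff k,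
    mul_right_cancel₀ (pow_ne_zero k (show (6:ℤ) ≠ 0 by norm_num)) (h2.trans ?_)⟩
  · rw [mul_right_comm, ← pow_add, Nat.sub_add_cancel hk]

lemma term_int (n k : ℕ) (hn : 2 ≤ n) (hk : k ≤ 30 * n) (hne : k ≠ 14 * n) :
    ∃ a : ℤ, (DD n : ℝ) * ((cc n k : ℝ) * (((3:ℝ) ^ ((k:ℤ) - 14 * n) - 2 ^ ((k:ℤ) - 14 * n)) / (((k:ℤ) - 14 * n : ℤ) : ℝ))) = a := by
  rcases lt_or_gt_of_ne hne with h | h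
  · obtain ⟨l, hl⟩ := Nat.exists_eq_add_of_lt h
    set m := l + 1 with hm
    have e : (k : ℤ) - 14 * n = -(m : ℤ) := by omega
    have hd : (6:ℤ) ^ m ∣ cc n k := (pow_dvd_pow 6 (by omega)).trans (six_dvd n k (by omega))
    obtain ⟨c, hc⟩ := hd
    have hdv := dvd_DD n m (by omega) (by omega) c ?_
    · obtain ⟨z, hz⟩ := hdv
      refine ⟨z * (3 ^ m - 2 ^ m), ?_⟩
      rw [e, hc, zpow_neg, zpow_neg, zpow_natCast, zpow_natCast]
      have hz' : (DD n : ℝ) * c = m * z := by exact_mod_cast hz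
      have hm0 : (m : ℝ) ≠ 0 := by positivity
      have h6 : (6:ℝ) ^ m = 2 ^ m * 3 ^ m := by rw [← mul_pow]; norm_num
      push_cast
      rw [h6]
      field_simp
      linear_combination (2 ^ m - 3 ^ m : ℝ) * (-1) * hz'
    · intro p hp hpm
      have hg := gain (k := k) hp (by rw [e]; exact (Int.natCast_dvd_natCast.mpr hpm).neg_right)
      rw [hc] at hg
      have hpr := (mem_SS hp).1
      rcases (Nat.prime_iff_prime_int.mp hpr).dvd_or_dvd hg with h6 | h6
      · exfalso
        have := (Nat.prime_iff_prime_int.mp hpr).dvd_of_dvd_pow h6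
        have h6' : p ∣ 6 := by exact_mod_cast this
        have hle := Nat.le_of_dvd (by norm_num) h6'
        have h5 : 5 ≤ p := by have := SS_gt hp; omega
        clear hg h6 this hp hpm
        interval_cases p
        · omega
        · revert hpr; norm_num
      · exact h6
  · obtain ⟨l, hl⟩ := Nat.exists_eq_add_of_lt h
    set m := l + 1 with hm
    have e : (k : ℤ) - 14 * n = (m : ℤ) := by omega
    have hdv := dvd_DD n m (by omega) (by omega) (cc n k) (fun p hp hpm => gain hp (by rw [e]; exact Int.natCast_dvd_natCast.mpr hpm))
    obtain ⟨z, hz⟩ := hdv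
    refine ⟨z * (3 ^ m - 2 ^ m), ?_⟩
    rw [e, zpow_natCast, zpow_natCast]
    have hz' : (DD n : ℝ) * cc n k = m * z := by exact_mod_cast hz
    have hm0 : (m : ℝ) ≠ 0 := by positivity
    push_cast
    field_simp
    linear_combination (3 ^ m - 2 ^ m : ℝ) * hz'

noncomputable def LL (n : ℕ) : ℝ := ∫ t in (2:ℝ)..3, ((t - 2) * (3 - t)) ^ (15 * n) / t ^ (14 * n + 1)

lemma LL_eq (n : ℕ) : LL n = ∑ k ∈ Finset.range (30 * n + 1), (cc n k : ℝ) * ∫ t in (2:ℝ)..3, t ^ ((k:ℤ) - 14 * n - 1) := by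
  have h0 : (0:ℝ) ∉ Set.uIcc 2 3 := by
    rw [Set.uIcc_of_le (by norm_num)]; intro h; have := h.1; norm_num at this
  simp_rw [← intervalIntegral.integral_const_mul]
  rw [← intervalIntegral.integral_finsetSum]
  · unfold LL
    refine intervalIntegral.integral_congr fun t ht => ?_
    rw [Set.uIcc_of_le (by norm_num)] at ht
    have ht0 : t ≠ 0 := by have := ht.1; intro h; rw [h] at this; norm_num at this
    have e1 : ((t - 2) * (3 - t)) ^ (15 * n) = ((qq ^ (15 * n)).map (Int.castRingHom ℝ)).eval t := by
      simp [qq, Polynomial.eval_pow]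
    simp only [e1]
    rw [Polynomial.eval_eq_sum_range' (n := 30 * n + 1)]
    · rw [Finset.sum_div]
      refine Finset.sum_congr rfl fun k _ => ?_
      rw [Polynomial.coeff_map, zpow_sub₀ ht0, zpow_sub₀ ht0, zpow_natCast, zpow_one, mul_div_assoc]
      simp only [cc, eq_intCast]
      congr 1
      have : (14 * (n:ℤ)) = ((14 * n : ℕ) : ℤ) := by push_cast; ring
      rw [this, zpow_natCast, pow_succ, div_div]
    · have := Polynomial.natDegree_map_le (p := qq ^ (15 * n)) (f := Int.castRingHom ℝ)
      have := qq_pow_deg (15 * n)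
      omega
  · intro k _
    apply IntervalIntegrable.const_mul
    exact intervalIntegral.intervalIntegrable_zpow (Or.inr h0)

lemma LL_form (n : ℕ) (hn : 2 ≤ n) : ∃ a : ℤ, (DD n : ℝ) * LL n = DD n * cc n (14 * n) * Real.log (3 / 2) + a := by
  have h0 : (0:ℝ) ∉ Set.uIcc 2 3 := by
    rw [Set.uIcc_of_le (by norm_num)]; intro h; have := h.1; norm_num at this
  have h : ∀ k : ℕ, ∃ a : ℤ, k ∈ (Finset.range (30 * n + 1)).erase (14 * n) →
      (DD n : ℝ) * ((cc n k : ℝ) * ∫ t in (2:ℝ)..3, t ^ ((k:ℤ) - 14 * n - 1)) = a := by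
    intro k
    by_cases hk : k ∈ (Finset.range (30 * n + 1)).erase (14 * n)
    · have hk' := Finset.mem_erase.mp hk
      obtain ⟨a, ha⟩ := term_int n k hn (by have := Finset.mem_range.mp hk'.2; omega) hk'.1
      refine ⟨a, fun _ => ?_⟩
      rw [← ha, integral_zpow (Or.inr ⟨by have := hk'.1; omega, h0⟩)]
      congr 3
      · ring_nf
      · push_cast; ring
    · exact ⟨0, fun h => absurd h hk⟩
  choose f hf using h
  refine ⟨∑ k ∈ (Finset.range (30 * n + 1)).erase (14 * n), f k, ?_⟩
  rw [LL_eq, Finset.mul_sum, ← Finset.add_sum_erase _ _ (Finset.mem_range.mpr (by omega : 14 * n < 30 * n + 1))]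
  push_cast
  congr 1
  · rw [mul_assoc]
    congr 2
    have : ∀ t : ℝ, t ^ ((14 * (n:ℤ)) - 14 * n - 1) = t⁻¹ := by intro t; rw [sub_self, zero_sub, zpow_neg_one]
    simp only [this]
    rw [integral_inv h0]
  · exact Finset.sum_congr rfl fun k hk => hf k hk


lemma cc_bound (n : ℕ) : |(cc n (14 * n) : ℝ)| ≤ (2 ^ 16 * 5 ^ 15) ^ n := by
  let R : Polynomial ℕ := ((Polynomial.X + Polynomial.C 2) * (Polynomial.X + Polynomial.C 3)) ^ (15 * n)
  have h1 : (qq ^ (15 * n)).comp (Polynomial.C (-1) * Polynomial.X) =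
      Polynomial.C ((-1) ^ (15 * n)) * R.map (Nat.castRingHom ℤ) := by
    simp only [R]
    rw [Polynomial.pow_comp, Polynomial.C_pow, Polynomial.map_pow, ← mul_pow]
    congr 1
    simp only [qq, Polynomial.mul_comp, Polynomial.sub_comp, Polynomial.X_comp, Polynomial.C_comp, Polynomial.map_mul, Polynomial.map_add, Polynomial.map_X, Polynomial.map_C]
    simp
    ring
  have h2 := congrArg (fun P => |Polynomial.coeff P (14 * n)|) h1
  simp only [Polynomial.comp_C_mul_X_coeff, Polynomial.coeff_C_mul, Polynomial.coeff_map, abs_mul, abs_pow, abs_neg, abs_one, one_pow, mul_one, one_mul] at h2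
  have h3 : R.eval 2 = 20 ^ (15 * n) := by
    simp [R]
  have h4 : R.coeff (14 * n) * 2 ^ (14 * n) ≤ 20 ^ (15 * n) := by
    rw [← h3, Polynomial.eval_eq_sum_range' (n := max (R.natDegree + 1) (14 * n + 1)) (by omega)]
    exact Finset.single_le_sum (f := fun k => R.coeff k * 2 ^ k) (fun _ _ => Nat.zero_le _) (Finset.mem_range.mpr (by omega))
  have h5 : |cc n (14 * n)| = (R.coeff (14 * n) : ℤ) := by
    unfold cc; rw [h2]; simp
  have h6 : |(cc n (14 * n) : ℝ)| = (R.coeff (14 * n) : ℝ) := by exact_mod_cast h5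
  rw [h6]
  have h7 : (R.coeff (14 * n) : ℝ) * 2 ^ (14 * n) ≤ 20 ^ (15 * n) := by exact_mod_cast h4
  have h8 : (20:ℝ) ^ (15 * n) = (2 ^ 16 * 5 ^ 15) ^ n * 2 ^ (14 * n) := by
    rw [pow_mul, pow_mul, ← mul_pow]; norm_num
  rw [h8] at h7
  exact le_of_mul_le_mul_right h7 (by positivity)

lemma up_pt (t : ℝ) (h1 : 2 ≤ t) (h2 : t ≤ 3) : ((t - 2) * (3 - t)) ^ 15 ≤ 3e-15 * t ^ 14 := by
  have h0 : 0 ≤ (t - 2) * (3 - t) := mul_nonneg (by linarith) (by linarith)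
  by_cases h : t ≤ 2.5
  · have : (t - 2) * (3 - t) ≤ 0.101021 * t := by nlinarith [sq_nonneg (t - 2.4494895)]
    calc _ ≤ (0.101021 * t) ^ 15 := by gcongr
      _ = 0.101021 ^ 15 * t * t ^ 14 := by ring
      _ ≤ 0.101021 ^ 15 * 2.5 * t ^ 14 := by gcongr
      _ ≤ _ := by gcongr; norm_num
  · have : (t - 2) * (3 - t) ≤ 0.1 * t := by nlinarith
    calc _ ≤ (0.1 * t) ^ 15 := by gcongr
      _ = 0.1 ^ 15 * t * t ^ 14 := by ring
      _ ≤ 0.1 ^ 15 * 3 * t ^ 14 := by gcongr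
      _ ≤ _ := by gcongr; norm_num

lemma lo_pt (t : ℝ) (h1 : 2.45 ≤ t) (h2 : t ≤ 2.451) : 2.8e-15 * t ^ 14 ≤ ((t - 2) * (3 - t)) ^ 15 := by
  have : 0.2475 ≤ (t - 2) * (3 - t) := by nlinarith
  calc _ ≤ (2.8e-15 : ℝ) * 2.451 ^ 14 := by gcongr
    _ ≤ 0.2475 ^ 15 := by norm_num
    _ ≤ _ := by gcongr

lemma int_cont (n : ℕ) : ContinuousOn (fun t : ℝ => ((t - 2) * (3 - t)) ^ (15 * n) / t ^ (14 * n + 1)) (Set.Icc 2 3) := by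
  refine ContinuousOn.div (by fun_prop) (by fun_prop) fun t ht => ?_
  have : 0 < t := by linarith [ht.1]
  positivity

lemma LL_upper (n : ℕ) : LL n ≤ (3e-15) ^ n := by
  unfold LL
  have h : ∫ t in (2:ℝ)..3, ((t - 2) * (3 - t)) ^ (15 * n) / t ^ (14 * n + 1) ≤ ∫ t in (2:ℝ)..3, (3e-15 : ℝ) ^ n := by
    refine intervalIntegral.integral_mono_on (by norm_num) ?_ (by simp) fun t ht => ?_
    · apply ContinuousOn.intervalIntegrable
      rw [Set.uIcc_of_le (by norm_num)]; exact int_cont n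
    · have ht0 : 0 < t := by linarith [ht.1]
      have h0 : 0 ≤ (t - 2) * (3 - t) := mul_nonneg (by linarith [ht.1]) (by linarith [ht.2])
      rw [div_le_iff₀ (by positivity), pow_mul, pow_succ t (14 * n), pow_mul, ← mul_assoc, ← mul_pow]
      calc _ ≤ (3e-15 * t ^ 14) ^ n := pow_le_pow_left₀ (by positivity) (up_pt t ht.1 ht.2) n
        _ ≤ _ := le_mul_of_one_le_right (by positivity) (by linarith [ht.1])
  refine h.trans ?_
  rw [intervalIntegral.integral_const]; norm_num

lemma LL_lower (n : ℕ) : 0.001 / 3 * (2.8e-15) ^ n ≤ LL n := by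
  unfold LL
  have hii : ∀ a b : ℝ, 2 ≤ a → a ≤ b → b ≤ 3 → IntervalIntegrable (fun t : ℝ => ((t - 2) * (3 - t)) ^ (15 * n) / t ^ (14 * n + 1)) volume a b := by
    intro a b ha hab hb
    apply ContinuousOn.intervalIntegrable
    rw [Set.uIcc_of_le hab]; exact (int_cont n).mono (Set.Icc_subset_Icc ha hb)
  have h : ∫ t in (2.45:ℝ)..2.451, (2.8e-15 : ℝ) ^ n / 3 ≤ ∫ t in (2.45:ℝ)..2.451, ((t - 2) * (3 - t)) ^ (15 * n) / t ^ (14 * n + 1) := by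
    refine intervalIntegral.integral_mono_on (by norm_num) (by simp) (hii _ _ (by norm_num) (by norm_num) (by norm_num)) fun t ht => ?_
    have ht0 : 0 < t := by linarith [ht.1]
    have := pow_le_pow_left₀ (by positivity) (lo_pt t ht.1 ht.2) n
    rw [mul_pow, ← pow_mul, ← pow_mul] at this
    rw [div_le_div_iff₀ (by norm_num) (by positivity), pow_succ]
    have h3 : t ≤ 3 := by linarith [ht.2]
    calc (2.8e-15 : ℝ) ^ n * (t ^ (14 * n) * t) = (2.8e-15 : ℝ) ^ n * t ^ (14 * n) * t := by ring
      _ ≤ _ := mul_le_mul this h3 ht0.le (le_trans (by positivity) this)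
  have h2 : ∫ t in (2.45:ℝ)..2.451, ((t - 2) * (3 - t)) ^ (15 * n) / t ^ (14 * n + 1) ≤
      ∫ t in (2:ℝ)..3, ((t - 2) * (3 - t)) ^ (15 * n) / t ^ (14 * n + 1) := by
    refine intervalIntegral.integral_mono_interval (by norm_num) (by norm_num) (by norm_num) ?_ (hii _ _ le_rfl (by norm_num) le_rfl)
    refine (ae_restrict_iff' measurableSet_Ioc).mpr (Eventually.of_forall fun t ht => ?_)
    have ht0 : 0 < t := by linarith [ht.1]
    have h0 : 0 ≤ (t - 2) * (3 - t) := mul_nonneg (by linarith [ht.1]) (by linarith [ht.2])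
    simp only [Pi.zero_apply]
    positivity
  refine le_trans ?_ (h.trans h2)
  rw [intervalIntegral.integral_const, smul_eq_mul]
  have : (0:ℝ) ≤ 2.8e-15 ^ n := by positivity
  linarith

lemma generic (α σ τ κ : ℝ) (a b : ℕ → ℤ) (n0 : ℕ) (hσ : 0 < σ) (hτ : 0 < τ) (hκ : (τ + σ) / σ < κ)
    (h : ∀ n : ℕ, n0 ≤ n → 0 < |b n * α - a n| ∧ |b n * α - a n| ≤ Real.exp (-σ * n) ∧
      |(b n : ℝ)| ≤ Real.exp (τ * n) ∧ |(b n : ℝ)| * Real.exp (-(τ + σ) * n) ≤ |b n * α - a n|) :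
    {pq : ℤ × ℕ+ | |α - (pq.1 : ℝ) / ((pq.2 : ℕ) : ℝ)| < ((pq.2 : ℕ) : ℝ) ^ (-κ)}.Finite := by
  set L := τ + σ with hL
  have hLp : 0 < L := by positivity
  have hκ0 : 0 < κ := lt_trans (by positivity) hκ
  have hmain : ∀ (p : ℤ) (q : ℕ), 0 < q → (n0 : ℝ) ≤ Real.log (2 * q) / σ →
      Real.exp (-L) * (2 * q : ℝ) ^ (-(L / σ)) ≤ |α - p / q| := by
    intro p q hq hn0
    have hq' : (1:ℝ) ≤ q := by exact_mod_cast hq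
    set n := ⌈Real.log (2 * q) / σ⌉₊ with hn
    have hge : Real.log (2 * q) / σ ≤ n := Nat.le_ceil _
    have hlt : (n:ℝ) < Real.log (2 * q) / σ + 1 := Nat.ceil_lt_add_one (div_nonneg (Real.log_nonneg (by linarith)) hσ.le)
    have hnn : n0 ≤ n := by exact_mod_cast hn0.trans hge
    obtain ⟨h1, h2, h3, h4⟩ := h n hnn
    have hexp : Real.exp (-σ * n) * (2 * q) ≤ 1 := by
      rw [div_le_iff₀ hσ] at hge
      calc _ = Real.exp (-σ * n) * Real.exp (Real.log (2 * q)) := by rw [Real.exp_log (by positivity)]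
        _ ≤ 1 := by rw [← Real.exp_add]; exact Real.exp_le_one_iff.mpr (by linarith)
    have hstep : Real.exp (-L) * (2 * q : ℝ) ^ (-(L / σ)) ≤ Real.exp (-L * n) := by
      rw [Real.rpow_def_of_pos (by positivity), ← Real.exp_add]
      apply Real.exp_le_exp.mpr
      have : L * n ≤ L * (Real.log (2 * q) / σ + 1) := by gcongr
      have e : L * (Real.log (2 * q) / σ + 1) = Real.log (2 * q) * (L / σ) + L := by ring
      linarith
    refine hstep.trans ?_
    have hqpos : (0:ℝ) < q := by linarith
    by_cases hz : (q : ℤ) * a n - p * b n = 0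
    · have hz' : (q : ℝ) * a n = p * b n := by
        have : (q : ℤ) * a n = p * b n := by linarith
        exact_mod_cast this
      have e : b n * α - a n = b n * (α - p / q) := by
        field_simp
        linear_combination (-1) * hz'
      rw [e, abs_mul] at h4 h1
      have hb : 0 < |(b n : ℝ)| := by
        by_contra hb
        have : |(b n : ℝ)| = 0 := le_antisymm (not_lt.mp hb) (abs_nonneg _)
        rw [this] at h1; simp at h1
      exact le_of_mul_le_mul_left h4 hb
    · have hone : (1:ℝ) ≤ |(q : ℝ) * a n - p * b n| := by
        exact_mod_cast Int.one_le_abs hz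
      have e : (q : ℝ) * a n - p * b n = -(q * (b n * α - a n)) + q * (b n * (α - p / q)) := by
        field_simp
        ring
      have htri : |(q : ℝ) * a n - p * b n| ≤ q * |b n * α - a n| + q * (|(b n : ℝ)| * |α - p / q|) := by
        rw [e]
        refine (abs_add_le _ _).trans ?_
        rw [abs_neg, abs_mul, abs_mul, abs_mul, abs_of_pos hqpos]
      have hA := abs_nonneg (α - p / q)
      have h5 : q * |b n * α - a n| ≤ 1 / 2 := by
        have : q * |b n * α - a n| ≤ q * Real.exp (-σ * n) := by gcongr
        linarith
      have h6 : 1 ≤ 2 * q * (Real.exp (τ * n) * |α - p / q|) := by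
        have : q * (|(b n : ℝ)| * |α - p / q|) ≤ q * (Real.exp (τ * n) * |α - p / q|) := by gcongr
        linarith
      calc Real.exp (-L * n) ≤ Real.exp (-L * n) * (2 * q * (Real.exp (τ * n) * |α - p / q|)) := le_mul_of_one_le_right (Real.exp_pos _).le h6
        _ = (Real.exp (-σ * n) * (2 * q)) * |α - p / q| := by
          have : Real.exp (-σ * n) = Real.exp (-L * n) * Real.exp (τ * n) := by
            rw [← Real.exp_add]; congr 1; rw [hL]; ring
          rw [this]; ring
        _ ≤ 1 * |α - p / q| := by gcongr
        _ = _ := one_mul _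
  have hev : ∀ᶠ q : ℕ in atTop, (n0 : ℝ) ≤ Real.log (2 * q) / σ ∧
      Real.exp L * 2 ^ (L / σ) ≤ (q : ℝ) ^ (κ - L / σ) := by
    refine Eventually.and ?_ ?_
    · have : Tendsto (fun q : ℕ => Real.log (2 * q) / σ) atTop atTop :=
        (Real.tendsto_log_atTop.comp (tendsto_natCast_atTop_atTop.const_mul_atTop two_pos)).atTop_div_const hσ
      exact this.eventually_ge_atTop _
    · exact ((tendsto_rpow_atTop (sub_pos.mpr hκ)).comp tendsto_natCast_atTop_atTop).eventually_ge_atTop _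
  obtain ⟨Q, hQ⟩ := eventually_atTop.mp hev
  have hqQ : ∀ pq : ℤ × ℕ+, |α - (pq.1 : ℝ) / ((pq.2 : ℕ) : ℝ)| < ((pq.2 : ℕ) : ℝ) ^ (-κ) → (pq.2 : ℕ) < Q := by
    rintro ⟨p, q⟩ hpq
    simp only at hpq ⊢
    by_contra hcon
    obtain ⟨g1, g2⟩ := hQ q (not_lt.mp hcon)
    have g3 := hmain p q q.pos g1
    have hq0 : (0:ℝ) < (q:ℕ) := by exact_mod_cast q.pos
    have g4 := lt_of_le_of_lt g3 hpq
    rw [Real.mul_rpow two_pos.le hq0.le, Real.rpow_neg two_pos.le, Real.exp_neg] at g4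
    rw [Real.rpow_sub hq0, le_div_iff₀ (by positivity)] at g2
    rw [Real.rpow_neg hq0.le, Real.rpow_neg hq0.le] at g4
    rw [← mul_inv, ← mul_inv, inv_lt_inv₀ (by positivity) (by positivity)] at g4
    linarith
  have key : ∀ (p : ℤ) (q : ℕ+), |α - (p : ℝ) / ((q : ℕ) : ℝ)| < ((q : ℕ) : ℝ) ^ (-κ) →
      |p| ≤ ⌈Q * (|α| + 1)⌉ ∧ q ≤ (Nat.succPNat Q) := by
    intro p q hpq
    have hlt := hqQ (p, q) hpq
    simp only at hlt
    have hq0 : (0:ℝ) < (q:ℕ) := by exact_mod_cast q.pos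
    have hq1 : (1:ℝ) ≤ (q:ℕ) := by exact_mod_cast q.pos
    have h1 : ((q : ℕ) : ℝ) ^ (-κ) ≤ 1 := Real.rpow_le_one_of_one_le_of_nonpos hq1 (by linarith)
    have h2 : |(p : ℝ) / (q : ℕ)| ≤ |α| + 1 := by
      have := abs_sub_abs_le_abs_sub ((p : ℝ) / (q : ℕ)) α
      rw [abs_sub_comm] at this
      linarith
    have hqQ' : ((q : ℕ) : ℝ) ≤ Q := by exact_mod_cast hlt.le
    have h3 : |(p : ℝ)| ≤ Q * (|α| + 1) := by
      rw [abs_div, abs_of_pos hq0, div_le_iff₀ hq0] at h2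
      have := abs_nonneg α
      nlinarith
    have h4 := h3.trans (Int.le_ceil _)
    have h5 : |p| ≤ ⌈Q * (|α| + 1)⌉ := by exact_mod_cast h4
    have h6 : q ≤ (Nat.succPNat Q) := by
      rw [← PNat.coe_le_coe, Nat.succPNat_coe]; omega
    exact ⟨h5, h6⟩
  refine Set.Finite.subset ((Set.finite_Icc (-⌈Q * (|α| + 1)⌉) ⌈Q * (|α| + 1)⌉).prod
    (Set.finite_Iic (Nat.succPNat Q))) ?_
  intro pq hpq
  have k := key pq.1 pq.2 hpq
  exact ⟨abs_le.mp k.1, k.2⟩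


set_option exponentiation.threshold 8000 in
lemma num1 : (3e-15 : ℝ) ≤ Real.exp (-33.44) := by
  rw [Real.exp_neg, le_inv_comm₀ (by norm_num) (Real.exp_pos _)]
  refine le_of_pow_le_pow_left₀ (n := 25) (by norm_num) (by positivity) ?_
  rw [← Real.exp_nat_mul, show ((25:ℕ):ℝ) * 33.44 = (836:ℕ) * 1 by norm_num, Real.exp_nat_mul]
  calc _ ≤ (2.7182818286 : ℝ) ^ 836 := by gcongr; exact Real.exp_one_lt_d9.le
    _ ≤ _ := by norm_num

set_option exponentiation.threshold 8000 in
lemma num2 : Real.exp (-33.51) ≤ (2.8e-15 : ℝ) := by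
  rw [Real.exp_neg, inv_le_comm₀ (Real.exp_pos _) (by norm_num)]
  refine le_of_pow_le_pow_left₀ (n := 100) (by norm_num) (by positivity) ?_
  rw [← Real.exp_nat_mul, show ((100:ℕ):ℝ) * 33.51 = (3351:ℕ) * 1 by norm_num, Real.exp_nat_mul]
  calc _ ≤ (2.7182818283 : ℝ) ^ 3351 := by norm_num
    _ ≤ _ := by gcongr; exact Real.exp_one_gt_d9.le

set_option exponentiation.threshold 8000 in
lemma num3 : (2 ^ 16 * 5 ^ 15 : ℝ) ≤ Real.exp 35.235 := by
  refine le_of_pow_le_pow_left₀ (n := 200) (by norm_num) (by positivity) ?_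
  rw [← Real.exp_nat_mul, show ((200:ℕ):ℝ) * 35.235 = (7047:ℕ) * 1 by norm_num, Real.exp_nat_mul]
  calc _ ≤ (2.7182818283 : ℝ) ^ 7047 := by norm_num
    _ ≤ _ := by gcongr; exact Real.exp_one_gt_d9.le

theorem irrationality_measure_alpha_8 :
    ∀ κ : ℝ, κ > 3.43507 →
      {pq : ℤ × ℕ+ |
        |Real.sqrt 25 * Real.log ((Real.sqrt 25 - 1) / (Real.sqrt 25 + 1)) -
            (pq.1 : ℝ) / ((pq.2 : ℕ) : ℝ)| <
          ((pq.2 : ℕ) : ℝ) ^ (-κ)}.Finite := by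
  intro κ hκ
  have h5 : Real.sqrt 25 = 5 := by
    rw [show (25:ℝ) = 5 ^ 2 by norm_num]; exact Real.sqrt_sq (by norm_num)
  have hform : ∀ n : ℕ, ∃ a : ℤ, 2 ≤ n → (DD n : ℝ) * LL n = DD n * cc n (14 * n) * Real.log (3 / 2) + a := by
    intro n
    by_cases hn : 2 ≤ n
    · obtain ⟨a, ha⟩ := LL_form n hn
      exact ⟨a, fun _ => ha⟩
    · exact ⟨0, fun h => absurd h hn⟩
  choose f hf using hform
  have hlog : Real.log ((5 - 1) / (5 + 1)) = - Real.log (3 / 2) := by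
    rw [← Real.log_inv]; norm_num
  have hev : ∀ᶠ n : ℕ in atTop, 2 ≤ n ∧ (DD n : ℝ) ≤ Real.exp (13.41 * n) ∧ Real.log 5 ≤ 0.01 * n ∧ - Real.log (5 * (0.001 / 3)) ≤ 0.005 * n := by
    refine (eventually_ge_atTop 2).and (DD_bound.and (Eventually.and ?_ ?_))
    · exact (tendsto_natCast_atTop_atTop.const_mul_atTop (by norm_num)).eventually_ge_atTop _
    · exact (tendsto_natCast_atTop_atTop.const_mul_atTop (by norm_num)).eventually_ge_atTop _
  obtain ⟨n0, hn0⟩ := eventually_atTop.mp hev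
  rw [h5, hlog]
  refine generic (5 * -Real.log (3 / 2)) 20.02 48.73 κ (fun n => - 5 * f n) (fun n => - (DD n * cc n (14 * n))) n0
    (by norm_num) (by norm_num) (lt_trans (by norm_num) hκ) ?_
  intro n hn
  obtain ⟨hn2, hD, hl1, hl2⟩ := hn0 n hn
  have e : ((- (DD n * cc n (14 * n)) : ℤ) : ℝ) * (5 * -Real.log (3 / 2)) - ((- 5 * f n : ℤ) : ℝ) = 5 * (DD n * LL n) := by
    rw [hf n hn2]; push_cast; ring
  have hDpos : (0:ℝ) < DD n := by exact_mod_cast DD_pos n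
  have hLlo := LL_lower n
  have hLup := LL_upper n
  have hLpos : 0 < LL n := lt_of_lt_of_le (by positivity) hLlo
  have hc := cc_bound n
  have p1 : (3e-15 : ℝ) ^ n ≤ Real.exp (-33.44 * n) := by
    rw [mul_comm, Real.exp_nat_mul]; exact pow_le_pow_left₀ (by norm_num) num1 n
  have p2 : Real.exp (-33.51 * n) ≤ (2.8e-15 : ℝ) ^ n := by
    rw [mul_comm, Real.exp_nat_mul]; exact pow_le_pow_left₀ (Real.exp_pos _).le num2 n
  have p3 : |(cc n (14 * n) : ℝ)| ≤ Real.exp (35.235 * n) := by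
    rw [mul_comm (35.235 : ℝ), Real.exp_nat_mul]; exact hc.trans (pow_le_pow_left₀ (by norm_num) num3 n)
  have p5 : (5:ℝ) ≤ Real.exp (0.01 * n) := (Real.log_le_iff_le_exp (by norm_num)).mp hl1
  have p6 : Real.exp (-(0.005 * n)) ≤ 5 * (0.001 / 3) := by
    rw [← Real.le_log_iff_exp_le (by norm_num)]; linarith
  have hb : |((- (DD n * cc n (14 * n)) : ℤ) : ℝ)| = DD n * |(cc n (14 * n) : ℝ)| := by
    push_cast; rw [abs_neg, abs_mul, abs_of_pos hDpos]
  simp only [e]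
  rw [hb, abs_of_pos (by positivity : 0 < 5 * (DD n * LL n))]
  refine ⟨by positivity, ?_, ?_, ?_⟩
  · calc 5 * (DD n * LL n) ≤ Real.exp (0.01 * n) * (Real.exp (13.41 * n) * Real.exp (-33.44 * n)) := by
          gcongr; exact hLup.trans p1
      _ = Real.exp (-20.02 * n) := by rw [← Real.exp_add, ← Real.exp_add]; congr 1; ring
  · calc _ ≤ Real.exp (13.41 * n) * Real.exp (35.235 * n) := by gcongr
      _ ≤ _ := by
        rw [← Real.exp_add]; apply Real.exp_le_exp.mpr
        have : (0:ℝ) ≤ n := Nat.cast_nonneg n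
        linarith
  · calc _ ≤ DD n * Real.exp (35.235 * n) * Real.exp (-(48.73 + 20.02) * n) := by gcongr
      _ = DD n * (Real.exp (-(0.005 * n)) * Real.exp (-33.51 * n)) := by
        rw [mul_assoc, ← Real.exp_add, ← Real.exp_add]; congr 2; ring
      _ ≤ DD n * (5 * (0.001 / 3) * 2.8e-15 ^ n) := by gcongr
      _ = 5 * (DD n * (0.001 / 3 * 2.8e-15 ^ n)) := by ring
      _ ≤ _ := by gcongr
end
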